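/- arXiv:2410.06403 — 3 statements merged into one kernel-verified Lean document; each statement's English description precedes it below -/
import Mathlib

section
/- Let f satisfy Assumption A and let (a_n) be an admissible sequence (so a_n > 0 for all large n). Then (1/γ_{2n}) · f^{(2n)}(√(a_n) · z) → cos(z) as n → ∞, uniformly on compact subsets of the complex plane. -/
open Filter

/-- Multiplicity of `z` as a zero of the entire function `f`: the least `n` with
`f⁽ⁿ⁾(z) ≠ 0`. -/
noncomputable def zeroMult (f : ℂ → ℂ) (z : ℂ) : ℕ :=
  sInf {n : ℕ | iteratedDeriv n f z ≠ 0}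

/-- The number of zeros of `f` in `[0, r]`, counted with multiplicity. -/
noncomputable def nPlus (f : ℂ → ℂ) (r : ℝ) : ℝ :=
  ∑' x : {x : ℝ // 0 ≤ x ∧ x ≤ r ∧ f ((x : ℝ) : ℂ) = 0}, (zeroMult f (((x : ℝ) : ℂ)) : ℝ)

/-- `h` is positive and slowly varying: `h(xr)/h(r) → 1` as `r → ∞` for every `x > 0`. -/
def SlowlyVarying (h : ℝ → ℝ) : Prop :=
  (∀ r > 0, 0 < h r) ∧ ∀ x > 0, Tendsto (fun r => h (x * r) / h r) atTop (nhds 1)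

/-- Assumption A for an even entire function `f`, with exponent `α` and slowly varying `h`. -/
structure AssumptionA (f : ℂ → ℂ) (α : ℝ) (h : ℝ → ℝ) : Prop where
  entire : Differentiable ℂ f
  order : ∃ ρ < (2 : ℝ), ∃ C > (0 : ℝ), ∀ z, ‖f z‖ ≤ C * Real.exp (‖z‖ ^ ρ)
  even : ∀ z, f (-z) = f z
  realOnReal : ∀ x : ℝ, (f ((x : ℝ) : ℂ)).im = 0
  ne_zero : f 0 ≠ 0
  realZeros : ∀ z, f z = 0 → z.im = 0
  alpha_mem : α ∈ Set.Ioo (0 : ℝ) 2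
  slowly : SlowlyVarying h
  density : Tendsto (fun r : ℝ => nPlus f r / (h r * r ^ α)) atTop (nhds 1)

/-- `γ_k = f⁽ᵏ⁾(0)`, so that `f(z) = ∑ γ_{2k} z^{2k}/(2k)!`. -/
noncomputable def gam (f : ℂ → ℂ) (k : ℕ) : ℂ := iteratedDeriv k f 0

/-- The polynomial `∏ (1 + y X)` over a multiset of reals. -/
noncomputable def prodPoly (s : Multiset ℝ) : Polynomial ℝ :=
  (s.map fun y => 1 + Polynomial.C y * Polynomial.X).prod

lemma prodPoly_zero : prodPoly 0 = 1 := by simp [prodPoly]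

lemma prodPoly_cons (y : ℝ) (s : Multiset ℝ) :
    prodPoly (y ::ₘ s) = (1 + Polynomial.C y * Polynomial.X) * prodPoly s := by
  simp [prodPoly]

lemma prodPoly_cons_coeff_zero (y : ℝ) (s : Multiset ℝ) :
    (prodPoly (y ::ₘ s)).coeff 0 = (prodPoly s).coeff 0 := by
  rw [prodPoly_cons]; simp [add_mul, mul_assoc]

lemma prodPoly_cons_coeff_succ (y : ℝ) (s : Multiset ℝ) (n : ℕ) :
    (prodPoly (y ::ₘ s)).coeff (n + 1) = (prodPoly s).coeff (n + 1) + y * (prodPoly s).coeff n := by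
  rw [prodPoly_cons]; simp [add_mul, mul_assoc]

lemma prodPoly_coeff_zero (s : Multiset ℝ) : (prodPoly s).coeff 0 = 1 := by
  induction s using Multiset.induction with
  | empty => simp [prodPoly_zero]
  | cons y s ih => rw [prodPoly_cons_coeff_zero, ih]

lemma prodPoly_coeff_nonneg (s : Multiset ℝ) (hs : ∀ y ∈ s, 0 ≤ y) (n : ℕ) :
    0 ≤ (prodPoly s).coeff n := by
  induction s using Multiset.induction generalizing n with
  | empty =>
    rw [prodPoly_zero, Polynomial.coeff_one]; split_ifs <;> norm_num
  | cons y s ih =>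
    have ih' := ih (fun z hz => hs z (Multiset.mem_cons_of_mem hz))
    have hy := hs y (Multiset.mem_cons_self y s)
    cases n with
    | zero => rw [prodPoly_cons_coeff_zero]; exact ih' 0
    | succ n =>
      rw [prodPoly_cons_coeff_succ]
      have := mul_nonneg hy (ih' n)
      linarith [ih' (n+1)]

lemma prodPoly_coeff_mono (s u : Multiset ℝ) (hs : ∀ y ∈ s, 0 ≤ y) (hu : ∀ y ∈ u, 0 ≤ y) (n : ℕ) :
    (prodPoly s).coeff n ≤ (prodPoly (u + s)).coeff n := by
  induction u using Multiset.induction generalizing n with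
  | empty => simp
  | cons y u ih =>
    have hu' : ∀ z ∈ u, 0 ≤ z := fun z hz => hu z (Multiset.mem_cons_of_mem hz)
    have ih' := ih hu'
    have hy := hu y (Multiset.mem_cons_self y u)
    have hnn : ∀ z ∈ u + s, 0 ≤ z := by
      intro z hz
      rcases Multiset.mem_add.1 hz with h | h
      · exact hu' z h
      · exact hs z h
    rw [Multiset.cons_add]
    cases n with
    | zero => rw [prodPoly_cons_coeff_zero]; exact ih' 0
    | succ n =>
      rw [prodPoly_cons_coeff_succ]
      have := mul_nonneg hy (prodPoly_coeff_nonneg _ hnn n)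
      linarith [ih' (n+1)]

lemma prodPoly_coeff_pos (s : Multiset ℝ) (hs : ∀ y ∈ s, 0 < y) (n : ℕ) (hn : n ≤ s.card) :
    0 < (prodPoly s).coeff n := by
  induction s using Multiset.induction generalizing n with
  | empty => 
    have : n = 0 := by simpa using hn
    subst this
    simp [prodPoly_zero]
  | cons y s ih =>
    have hs' : ∀ z ∈ s, 0 < z := fun z hz => hs z (Multiset.mem_cons_of_mem hz)
    have ih' := ih hs'
    have hy := hs y (Multiset.mem_cons_self y s)
    cases n with
    | zero => rw [prodPoly_cons_coeff_zero]; exact ih' 0 (Nat.zero_le _)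
    | succ n =>
      rw [prodPoly_cons_coeff_succ]
      have h1 := mul_pos hy (ih' n (by simpa using hn))
      have h2 := prodPoly_coeff_nonneg s (fun z hz => (hs' z hz).le) (n+1)
      linarith

/-- Log-concavity of the coefficients. -/
lemma prodPoly_logConcave (s : Multiset ℝ) (hs : ∀ y ∈ s, 0 ≤ y) (i j : ℕ) (hij : i ≤ j) :
    (prodPoly s).coeff i * (prodPoly s).coeff (j + 1) ≤
      (prodPoly s).coeff (i + 1) * (prodPoly s).coeff j := by
  induction s using Multiset.induction generalizing i j with
  | empty =>
    simp [prodPoly_zero, Polynomial.coeff_one]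
  | cons y s ih =>
    have hs' : ∀ z ∈ s, 0 ≤ z := fun z hz => hs z (Multiset.mem_cons_of_mem hz)
    have ih' := ih hs'
    have hy := hs y (Multiset.mem_cons_self y s)
    have hnn := prodPoly_coeff_nonneg s hs'
    set c := (prodPoly s).coeff with hc
    rcases i with _ | i
    · rcases j with _ | j
      · rw [mul_comm]
      · rw [prodPoly_cons_coeff_zero, prodPoly_cons_coeff_succ, prodPoly_cons_coeff_succ,
          prodPoly_cons_coeff_succ, ← hc]
        have h1 := ih' 0 (j+1) (by omega)
        have h2 := ih' 0 j (by omega)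
        have h3 := hnn 0
        have h4 := hnn j
        have h5 : 0 ≤ y * y * (c 0 * c j) := by positivity
        have h6 : 0 ≤ y * (c (0+1) * c j) := mul_nonneg hy (mul_nonneg (hnn _) h4)
        nlinarith
    · rcases j with _ | j
      · omega
      · rw [prodPoly_cons_coeff_succ, prodPoly_cons_coeff_succ, prodPoly_cons_coeff_succ,
          prodPoly_cons_coeff_succ, ← hc]
        have h1 := ih' (i+1) (j+1) hij
        have h3 : y * y * (c i * c (j+1)) ≤ y * y * (c (i+1) * c j) :=
          mul_le_mul_of_nonneg_left (ih' i j (by omega)) (by positivity)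
        have h2 : c i * c (j+1+1) ≤ c (i+1+1) * c j := by
          rcases Nat.lt_or_ge i j with h | h
          · exact (ih' i (j+1) (by omega)).trans (ih' (i+1) j h)
          · have : i = j := by omega
            subst this; rw [mul_comm]
        have h4 := mul_le_mul_of_nonneg_left h2 hy
        nlinarith

lemma prodPoly_unimodal (s : Multiset ℝ) (hs : ∀ y ∈ s, 0 ≤ y) (n : ℕ)
    (hpos : 0 < (prodPoly s).coeff n) (heq : (prodPoly s).coeff n = (prodPoly s).coeff (n+1))
    (k : ℕ) : (prodPoly s).coeff k ≤ (prodPoly s).coeff n := by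
  have lc := prodPoly_logConcave s hs
  set c := (prodPoly s).coeff with hc
  rcases le_total k n with h | h
  · have : ∀ m, m ≤ n → c (n - m) ≤ c n := by
      intro m
      induction m with
      | zero => intro _; simp
      | succ m ih =>
        intro hm
        have h1 := lc (n - (m+1)) n (by omega)
        rw [← heq] at h1
        have h2 := le_of_mul_le_mul_right h1 hpos
        rw [show n - (m+1) + 1 = n - m by omega] at h2
        exact h2.trans (ih (by omega))
    have h1 := this (n - k) (by omega)
    rwa [show n - (n - k) = k by omega] at h1
  · induction k, h using Nat.le_induction with
    | base => exact le_rfl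
    | succ k hk ih =>
      have h1 := lc n k hk
      rw [← heq] at h1
      exact (le_of_mul_le_mul_left h1 hpos).trans ih

lemma prodPoly_scale (t : ℝ) (s : Multiset ℝ) (n : ℕ) :
    (prodPoly (s.map (fun x => t * x))).coeff n = t ^ n * (prodPoly s).coeff n := by
  induction s using Multiset.induction generalizing n with
  | empty =>
    simp only [Multiset.map_zero, prodPoly_zero, Polynomial.coeff_one]
    split_ifs with h
    · simp [h]
    · simp
  | cons y s ih =>
    rw [Multiset.map_cons]
    cases n with
    | zero => rw [prodPoly_cons_coeff_zero, prodPoly_cons_coeff_zero, ih]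
    | succ n => rw [prodPoly_cons_coeff_succ, prodPoly_cons_coeff_succ, ih, ih]; ring

/-- mean -/
noncomputable def mMean (s : Multiset ℝ) : ℝ := (s.map fun y => y / (1 + y)).sum
/-- variance -/
noncomputable def mVar (s : Multiset ℝ) : ℝ := (s.map fun y => y / (1 + y) ^ 2).sum

lemma prodPoly_moments (s : Multiset ℝ) (hs : ∀ y ∈ s, 0 ≤ y) :
    (prodPoly s).derivative.eval 1 = mMean s * (prodPoly s).eval 1 ∧
    (prodPoly s).derivative.derivative.eval 1 =
      (mVar s + mMean s ^ 2 - mMean s) * (prodPoly s).eval 1 ∧ 0 < (prodPoly s).eval 1 := by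
  induction s using Multiset.induction with
  | empty => simp [prodPoly_zero, mMean, mVar]
  | cons y s ih =>
    have hs' : ∀ z ∈ s, 0 ≤ z := fun z hz => hs z (Multiset.mem_cons_of_mem hz)
    obtain ⟨h1, h2, h3⟩ := ih hs'
    have hy := hs y (Multiset.mem_cons_self y s)
    have hy1 : (1 + y) ≠ 0 := by positivity
    have e1 : mMean (y ::ₘ s) = y / (1 + y) + mMean s := by simp [mMean]
    have e2 : mVar (y ::ₘ s) = y / (1 + y) ^ 2 + mVar s := by simp [mVar]
    rw [prodPoly_cons, e1, e2]
    simp only [Polynomial.derivative_mul, Polynomial.derivative_add, Polynomial.derivative_one,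
      Polynomial.derivative_C, Polynomial.derivative_X, Polynomial.eval_mul, Polynomial.eval_add,
      Polynomial.eval_one, Polynomial.eval_C, Polynomial.eval_X, zero_mul,
      mul_one, zero_add, h1, h2]
    refine ⟨?_, ?_, by positivity⟩
    · field_simp
    · field_simp; ring

lemma prodPoly_variance (s : Multiset ℝ) (hs : ∀ y ∈ s, 0 ≤ y) :
    ∑ k ∈ Finset.range ((prodPoly s).natDegree + 1),
      ((k : ℝ) - mMean s) ^ 2 * (prodPoly s).coeff k = mVar s * (prodPoly s).eval 1 := by
  obtain ⟨h1, h2, h3⟩ := prodPoly_moments s hs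
  have e0 : (prodPoly s).eval 1 = ∑ k ∈ Finset.range ((prodPoly s).natDegree + 1),
      (prodPoly s).coeff k := by
    rw [Polynomial.eval_eq_sum_range]; simp
  have e1 : (prodPoly s).derivative.eval 1 =
      ∑ k ∈ Finset.range ((prodPoly s).natDegree + 1), (k : ℝ) * (prodPoly s).coeff k := by
    rw [Polynomial.derivative_eval, Polynomial.sum_over_range _ (by simp)]
    refine Finset.sum_congr rfl fun k _ => ?_
    simp [mul_comm]
  have e2 : (prodPoly s).derivative.derivative.eval 1 =
      ∑ k ∈ Finset.range ((prodPoly s).natDegree + 1),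
        (k : ℝ) * (k - 1) * (prodPoly s).coeff k := by
    conv_lhs => rw [Polynomial.as_sum_range (prodPoly s)]
    simp only [Polynomial.derivative_sum, Polynomial.derivative_monomial,
      Polynomial.eval_finsetSum, Polynomial.eval_monomial]
    refine Finset.sum_congr rfl fun k _ => ?_
    rcases k with _ | k
    · simp
    · simp; ring
  have : ∑ k ∈ Finset.range ((prodPoly s).natDegree + 1),
      ((k : ℝ) - mMean s) ^ 2 * (prodPoly s).coeff k = 
      (prodPoly s).derivative.derivative.eval 1 + (1 - 2 * mMean s) *
       (prodPoly s).derivative.eval 1 + mMean s ^ 2 * (prodPoly s).eval 1 := by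
    rw [e0, e1, e2, Finset.mul_sum, Finset.mul_sum, ← Finset.sum_add_distrib,
      ← Finset.sum_add_distrib]
    exact Finset.sum_congr rfl fun k _ => by ring
  rw [this, h1, h2]; ring

/-- Chebyshev lower bound for the largest coefficient. -/
lemma prodPoly_max_lower (s : Multiset ℝ) (hs : ∀ y ∈ s, 0 ≤ y) (M : ℝ)
    (hM : ∀ k, (prodPoly s).coeff k ≤ M) (hV : 1 ≤ mVar s) :
    (prodPoly s).eval 1 ≤ 7 * Real.sqrt (mVar s) * M := by
  have hvar := prodPoly_variance s hs
  have hnn := prodPoly_coeff_nonneg s hs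
  set V := mVar s
  set σ := Real.sqrt V with hσ
  have hσ1 : 1 ≤ σ := by rw [hσ]; exact Real.one_le_sqrt.2 hV
  have hσ2 : σ ^ 2 = V := Real.sq_sqrt (by linarith)
  have hM0 : 0 ≤ M := (hnn 0).trans (hM 0)
  set μ := mMean s
  set c := (prodPoly s).coeff with hc
  set N := (prodPoly s).natDegree + 1
  have e0 : (prodPoly s).eval 1 = ∑ k ∈ Finset.range N, c k := by
    rw [Polynomial.eval_eq_sum_range]; simp [hc, N]
  set S := (prodPoly s).eval 1
  set A := (Finset.range N).filter (fun k : ℕ => |(k : ℝ) - μ| ≤ 2 * σ)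
  -- split
  have hsplit : ∑ k ∈ Finset.range N, c k ≤ ∑ k ∈ A, c k + S / 4 := by
    rw [← Finset.sum_filter_add_sum_filter_not (Finset.range N)
      (fun k : ℕ => |(k : ℝ) - μ| ≤ 2 * σ)]
    have : ∑ k ∈ (Finset.range N).filter (fun k : ℕ => ¬ |(k : ℝ) - μ| ≤ 2 * σ), c k ≤ S / 4 := by
      have h4 : 4 * V * ∑ k ∈ (Finset.range N).filter (fun k : ℕ => ¬ |(k : ℝ) - μ| ≤ 2 * σ), c k
          ≤ V * S := by
        rw [← hvar, Finset.mul_sum]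
        refine (Finset.sum_le_sum (g := fun k : ℕ => ((k : ℝ) - μ) ^ 2 * c k) ?_).trans
          (Finset.sum_le_sum_of_subset_of_nonneg (Finset.filter_subset _ _) ?_)
        · intro k hk
          have hk2 := (Finset.mem_filter.1 hk).2
          push Not at hk2
          refine mul_le_mul_of_nonneg_right ?_ (hnn k)
          rw [← hσ2, ← sq_abs ((k : ℝ) - μ)]
          nlinarith [abs_nonneg ((k : ℝ) - μ)]
        · intro k _ _
          exact mul_nonneg (sq_nonneg _) (hnn k)
      have hVpos : 0 < V := by linarith
      have h5 : V * (4 * ∑ k ∈ (Finset.range N).filter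
          (fun k : ℕ => ¬ |(k : ℝ) - μ| ≤ 2 * σ), c k) ≤ V * S := by linarith
      have := le_of_mul_le_mul_left h5 hVpos
      linarith
    linarith
  have hA : (A.card : ℝ) ≤ 4 * σ + 1 := by
    have h1 : A.map Nat.castEmbedding ⊆ Finset.Icc ⌈μ - 2 * σ⌉ ⌊μ + 2 * σ⌋ := by
      intro z hz
      obtain ⟨k, hk, rfl⟩ := Finset.mem_map.1 hz
      have hk2 := abs_le.1 (Finset.mem_filter.1 hk).2
      rw [Finset.mem_Icc]
      constructor
      · apply Int.ceil_le.2; simp; linarith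
      · apply Int.le_floor.2; simp; linarith
    have h2 := Finset.card_le_card h1
    rw [Finset.card_map, Int.card_Icc] at h2
    have h3 : (A.card : ℝ) ≤ ((⌊μ + 2 * σ⌋ + 1 - ⌈μ - 2 * σ⌉).toNat : ℝ) := by exact_mod_cast h2
    rcases le_total 0 (⌊μ + 2 * σ⌋ + 1 - ⌈μ - 2 * σ⌉) with h | h
    · have h4 : ((⌊μ + 2 * σ⌋ + 1 - ⌈μ - 2 * σ⌉).toNat : ℝ) 
          = ((⌊μ + 2 * σ⌋ + 1 - ⌈μ - 2 * σ⌉ : ℤ) : ℝ) := by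
        exact_mod_cast congrArg (Int.cast (R := ℝ)) (Int.toNat_of_nonneg h)
      rw [h4] at h3
      push_cast at h3
      linarith [Int.floor_le (μ + 2 * σ), Int.le_ceil (μ - 2 * σ)]
    · rw [Int.toNat_of_nonpos h] at h3
      simp at h3 ⊢
      rw [h3]; simp; linarith
  have hAs : ∑ k ∈ A, c k ≤ (4 * σ + 1) * M := by
    calc ∑ k ∈ A, c k ≤ A.card • M := Finset.sum_le_card_nsmul _ _ _ (fun k _ => hM k)
      _ = A.card * M := by simp
      _ ≤ _ := mul_le_mul_of_nonneg_right hA hM0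
  rw [← e0] at hsplit
  have : M ≤ σ * M := by nlinarith
  nlinarith

lemma prodPoly_cexp_norm (s : Multiset ℝ) (hs : ∀ y ∈ s, 0 ≤ y) (θ : ℝ) :
    ‖((prodPoly s).map (algebraMap ℝ ℂ)).eval (Complex.exp (θ * Complex.I))‖ ≤
      (prodPoly s).eval 1 * Real.exp (- (mVar s * (1 - Real.cos θ))) := by
  induction s using Multiset.induction with
  | empty => simp [prodPoly_zero, mVar]
  | cons y s ih =>
    have hs' : ∀ z ∈ s, 0 ≤ z := fun z hz => hs z (Multiset.mem_cons_of_mem hz)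
    have hy := hs y (Multiset.mem_cons_self y s)
    have ih' := ih hs'
    have e2 : mVar (y ::ₘ s) = y / (1 + y) ^ 2 + mVar s := by simp [mVar]
    have key : ‖(1 : ℂ) + y * Complex.exp (θ * Complex.I)‖ ≤
        (1 + y) * Real.exp (-(y / (1 + y) ^ 2 * (1 - Real.cos θ))) := by
      rw [← sq_le_sq₀ (norm_nonneg _) (by positivity), mul_pow, ← Real.exp_nat_mul,
        Complex.sq_norm, Complex.normSq_apply]
      have h1 := Real.add_one_le_exp (((2 : ℕ) : ℝ) * -(y / (1 + y) ^ 2 * (1 - Real.cos θ)))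
      have h2 := mul_le_mul_of_nonneg_left h1 (sq_nonneg (1 + y))
      refine le_trans (le_of_eq ?_) h2
      have hne : (1 + y) ≠ 0 := by positivity
      simp only [Complex.add_re, Complex.one_re, Complex.add_im, Complex.one_im, Complex.mul_re,
        Complex.mul_im, Complex.ofReal_re, Complex.ofReal_im, Complex.exp_ofReal_mul_I_re,
        Complex.exp_ofReal_mul_I_im]
      push_cast
      field_simp
      nlinarith [Real.sin_sq_add_cos_sq θ]
    rw [prodPoly_cons, e2]
    simp only [Polynomial.map_mul, Polynomial.map_add, Polynomial.map_one, Polynomial.map_C,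
      Polynomial.map_X, Polynomial.eval_mul, Polynomial.eval_add, Polynomial.eval_one,
      Polynomial.eval_C, Polynomial.eval_X, norm_mul, mul_one]
    calc _ ≤ ((1 + y) * Real.exp (-(y / (1 + y) ^ 2 * (1 - Real.cos θ)))) *
          ((prodPoly s).eval 1 * Real.exp (- (mVar s * (1 - Real.cos θ)))) := by
          refine mul_le_mul key ih' (norm_nonneg _) (by positivity)
      _ = _ := by
        rw [mul_mul_mul_comm, ← Real.exp_add]; congr 2; ring

lemma integral_cexp_int (m : ℤ) :
    ∫ θ in (-Real.pi)..Real.pi, Complex.exp (m * (θ * Complex.I)) =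
      if m = 0 then (2 * Real.pi : ℂ) else 0 := by
  split_ifs with h
  · subst h
    simp
    ring
  · have hm : (m : ℂ) * Complex.I ≠ 0 := by simp [h]
    have : ∀ θ : ℝ, Complex.exp (m * (θ * Complex.I)) = Complex.exp ((m * Complex.I) * θ) := by
      intro θ; congr 1; ring
    simp only [this]
    rw [integral_exp_mul_complex hm]
    have : Complex.exp (m * Complex.I * (Real.pi : ℝ)) =
        Complex.exp (m * Complex.I * ((-Real.pi : ℝ) : ℂ)) := by
      rw [Complex.exp_eq_exp_iff_exists_int]
      exact ⟨m, by push_cast; ring⟩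
    rw [this]; simp

lemma prodPoly_fourier (p : Polynomial ℝ) (n : ℕ) :
    ∫ θ in (-Real.pi)..Real.pi, Complex.exp (-(n : ℂ) * (θ * Complex.I)) *
      (p.map (algebraMap ℝ ℂ)).eval (Complex.exp (θ * Complex.I)) =
      (2 * Real.pi : ℂ) * (p.coeff n : ℂ) := by
  have e : ∀ θ : ℝ, Complex.exp (-(n : ℂ) * (θ * Complex.I)) *
      (p.map (algebraMap ℝ ℂ)).eval (Complex.exp (θ * Complex.I)) =
      ∑ k ∈ Finset.range (p.natDegree + 1), (p.coeff k : ℂ) *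
        Complex.exp ((((k : ℤ) - (n : ℤ) : ℤ) : ℂ) * (θ * Complex.I)) := by
    intro θ
    rw [Polynomial.eval_map, Polynomial.eval₂_eq_sum_range, Finset.mul_sum]
    refine Finset.sum_congr rfl fun k _ => ?_
    rw [← Complex.exp_nat_mul]
    simp only [Complex.coe_algebraMap]
    rw [mul_left_comm, ← Complex.exp_add]
    congr 2; push_cast; ring
  simp only [e]
  rw [intervalIntegral.integral_finsetSum]
  · simp only [intervalIntegral.integral_const_mul, integral_cexp_int]
    by_cases hn : n ∈ Finset.range (p.natDegree + 1)
    · rw [Finset.sum_eq_single n]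
      · simp; ring
      · intro b _ hb
        rw [if_neg (by omega)]; simp
      · intro h; exact absurd hn h
    · rw [Polynomial.coeff_eq_zero_of_natDegree_lt (by simpa using hn), Finset.sum_eq_zero]
      · simp
      · intro k hk
        have : k ≠ n := fun h => hn (h ▸ hk)
        rw [if_neg (by omega)]; simp
  · intro k _
    apply Continuous.intervalIntegrable
    fun_prop

lemma integral_abs_gauss (V : ℝ) (hV : 0 < V) :
    ∫ θ in (-Real.pi)..Real.pi, |θ| * Real.exp (-(V * (2 / Real.pi ^ 2 * θ ^ 2))) ≤
      Real.pi ^ 2 / (2 * V) := by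
  have hpi := Real.pi_pos
  have hcont : Continuous fun θ : ℝ => |θ| * Real.exp (-(V * (2 / Real.pi ^ 2 * θ ^ 2))) := by
    fun_prop
  have h2 : ∫ θ in (0:ℝ)..Real.pi, |θ| * Real.exp (-(V * (2 / Real.pi ^ 2 * θ ^ 2))) ≤
      Real.pi ^ 2 / (4 * V) := by
    have : ∫ θ in (0:ℝ)..Real.pi, |θ| * Real.exp (-(V * (2 / Real.pi ^ 2 * θ ^ 2))) =
        ∫ θ in (0:ℝ)..Real.pi, θ * Real.exp (-(V * (2 / Real.pi ^ 2 * θ ^ 2))) := by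
      apply intervalIntegral.integral_congr
      intro θ hθ
      rw [Set.uIcc_of_le hpi.le] at hθ
      simp only [abs_of_nonneg hθ.1]
    rw [this, intervalIntegral.integral_eq_sub_of_hasDerivAt
      (f := fun θ => -(Real.pi ^ 2 / (4 * V)) * Real.exp (-(V * (2 / Real.pi ^ 2 * θ ^ 2))))]
    · have := Real.exp_pos (-(V * (2 / Real.pi ^ 2 * Real.pi ^ 2)))
      have h3 : 0 < Real.pi ^ 2 / (4 * V) := by positivity
      simp only [ne_eq, OfNat.ofNat_ne_zero, not_false_eq_true, zero_pow, mul_zero, neg_zero,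
        Real.exp_zero, mul_one]
      nlinarith
    · intro θ _
      have h1 : HasDerivAt (fun θ : ℝ => -(V * (2 / Real.pi ^ 2 * θ ^ 2)))
          (-(V * (2 / Real.pi ^ 2 * (2 * θ)))) θ := by
        have := (((hasDerivAt_pow 2 θ).const_mul (2 / Real.pi ^ 2)).const_mul V).fun_neg
        simpa using! this
      have h2 := (h1.exp.const_mul (-(Real.pi ^ 2 / (4 * V))))
      have hV0 := hV.ne'
      have hp0 := hpi.ne'
      have e : -(Real.pi ^ 2 / (4 * V)) * (Real.exp (-(V * (2 / Real.pi ^ 2 * θ ^ 2))) *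
          -(V * (2 / Real.pi ^ 2 * (2 * θ)))) =
          (Real.pi ^ 2 / Real.pi ^ 2) * (V / V) * θ * 
            Real.exp (-(V * (2 / Real.pi ^ 2 * θ ^ 2))) := by ring
      rw [e, div_self (pow_ne_zero 2 hp0), div_self hV0, one_mul, one_mul] at h2; exact h2
    · apply Continuous.intervalIntegrable; fun_prop
  have h1 : ∫ θ in (-Real.pi)..0, |θ| * Real.exp (-(V * (2 / Real.pi ^ 2 * θ ^ 2))) =
      ∫ θ in (0:ℝ)..Real.pi, |θ| * Real.exp (-(V * (2 / Real.pi ^ 2 * θ ^ 2))) := by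
    have := intervalIntegral.integral_comp_neg (a := 0) (b := Real.pi) 
      (fun θ : ℝ => |θ| * Real.exp (-(V * (2 / Real.pi ^ 2 * θ ^ 2))))
    simp only [abs_neg, neg_sq, neg_zero] at this
    exact this.symm
  rw [← intervalIntegral.integral_add_adjacent_intervals (b := 0)
    (hcont.intervalIntegrable _ _) (hcont.intervalIntegrable _ _), h1]
  have : Real.pi ^ 2 / (2 * V) = Real.pi ^ 2 / (4 * V) + Real.pi ^ 2 / (4 * V) := by
    field_simp; norm_num
  linarith

/-- Difference of consecutive coefficients. -/
lemma prodPoly_diff (s : Multiset ℝ) (hs : ∀ y ∈ s, 0 ≤ y) (hV : 0 < mVar s) (n : ℕ) :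
    (prodPoly s).coeff (n+1) - (prodPoly s).coeff n ≤
      (prodPoly s).eval 1 * (Real.pi / (4 * mVar s)) := by
  have hpi := Real.pi_pos
  have hS : 0 < (prodPoly s).eval 1 := (prodPoly_moments s hs).2.2
  set p := prodPoly s with hp
  set V := mVar s
  set F : ℝ → ℂ := fun θ => (p.map (algebraMap ℝ ℂ)).eval (Complex.exp (θ * Complex.I)) with hF
  have hFc : Continuous F := by
    exact (Polynomial.continuous _).comp (by fun_prop)
  have h1 := prodPoly_fourier p (n+1)
  have h0 := prodPoly_fourier p n
  have hd : ∫ θ in (-Real.pi)..Real.pi, 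
      (Complex.exp (-((n+1 : ℕ) : ℂ) * (θ * Complex.I)) * F θ - 
        Complex.exp (-(n : ℂ) * (θ * Complex.I)) * F θ) =
        (2 * Real.pi : ℂ) * ((p.coeff (n+1) - p.coeff n : ℝ) : ℂ) := by
    rw [intervalIntegral.integral_sub, h1, h0]
    · push_cast; ring
    · apply Continuous.intervalIntegrable; fun_prop
    · apply Continuous.intervalIntegrable; fun_prop
  have hb : ‖∫ θ in (-Real.pi)..Real.pi, 
      (Complex.exp (-((n+1 : ℕ) : ℂ) * (θ * Complex.I)) * F θ - 
        Complex.exp (-(n : ℂ) * (θ * Complex.I)) * F θ)‖ ≤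
      ∫ θ in (-Real.pi)..Real.pi, p.eval 1 *
        (|θ| * Real.exp (-(V * (2 / Real.pi ^ 2 * θ ^ 2)))) := by
    apply intervalIntegral.norm_integral_le_of_norm_le (by linarith)
    · refine Eventually.of_forall fun θ hθ => ?_
      have e1 : Complex.exp (-((n+1 : ℕ) : ℂ) * (θ * Complex.I)) * F θ - 
        Complex.exp (-(n : ℂ) * (θ * Complex.I)) * F θ = 
        -(Complex.exp (((-((n+1 : ℕ) : ℝ) * θ : ℝ) : ℂ) * Complex.I) *
          (Complex.exp (Complex.I * θ) - 1) * F θ) := by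
        have : Complex.exp (-(n : ℂ) * (θ * Complex.I)) = 
          Complex.exp (((-((n+1 : ℕ) : ℝ) * θ : ℝ) : ℂ) * Complex.I) * Complex.exp (Complex.I * θ) := by
          rw [← Complex.exp_add]; congr 1; push_cast; ring
        rw [this]
        have : Complex.exp (-((n+1 : ℕ) : ℂ) * (θ * Complex.I)) = 
          Complex.exp (((-((n+1 : ℕ) : ℝ) * θ : ℝ) : ℂ) * Complex.I) := by
          congr 1; push_cast; ring
        rw [this]; ring
      rw [e1, norm_neg, norm_mul, norm_mul, Complex.norm_exp_ofReal_mul_I, one_mul]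
      have h2 : ‖Complex.exp (Complex.I * θ) - 1‖ ≤ |θ| := by
        simpa using Real.norm_exp_I_mul_ofReal_sub_one_le (x := θ)
      have h3 : ‖F θ‖ ≤ p.eval 1 * Real.exp (-(V * (2 / Real.pi ^ 2 * θ ^ 2))) := by
        refine (prodPoly_cexp_norm s hs θ).trans ?_
        refine mul_le_mul_of_nonneg_left ?_ hS.le
        apply Real.exp_le_exp.2
        have h4 : |θ| ≤ Real.pi := abs_le.2 ⟨hθ.1.le, hθ.2⟩
        have h5 := Real.cos_le_one_sub_mul_cos_sq h4
        have : V * (2 / Real.pi ^ 2 * θ ^ 2) ≤ V * (1 - Real.cos θ) :=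
          mul_le_mul_of_nonneg_left (by linarith) hV.le
        linarith
      calc _ ≤ |θ| * (p.eval 1 * Real.exp (-(V * (2 / Real.pi ^ 2 * θ ^ 2)))) :=
            mul_le_mul h2 h3 (norm_nonneg _) (abs_nonneg _)
        _ = _ := by ring
    · apply Continuous.intervalIntegrable; fun_prop
  rw [hd, intervalIntegral.integral_const_mul, norm_mul, Complex.norm_real] at hb
  have h6 : ‖(2 * Real.pi : ℂ)‖ = 2 * Real.pi := by
    simp [abs_of_pos hpi]
  rw [h6] at hb
  have h7 := mul_le_mul_of_nonneg_left (integral_abs_gauss V hV) hS.le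
  have h8 : 2 * Real.pi * (p.coeff (n+1) - p.coeff n) ≤ p.eval 1 * (Real.pi ^ 2 / (2 * V)) := by
    refine le_trans ?_ (hb.trans h7)
    exact mul_le_mul_of_nonneg_left (Real.le_norm_self _) (by positivity)
  have h9 : p.eval 1 * (Real.pi ^ 2 / (2 * V)) = 2 * Real.pi * (p.eval 1 * (Real.pi / (4 * V))) := by
    field_simp; norm_num
  rw [h9] at h8
  exact le_of_mul_le_mul_left h8 (by positivity)

/-- The main finite inequality. -/
lemma prodPoly_main (s : Multiset ℝ) (hs : ∀ y ∈ s, 0 ≤ y) (n : ℕ) (V : ℝ) (hV : 1 ≤ V)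
    (h1 : 0 < (prodPoly s).coeff (n+1)) (h2 : 0 < (prodPoly s).coeff (n+2))
    (hVs : V ≤ mVar (s.map fun x => ((prodPoly s).coeff (n+1) / (prodPoly s).coeff (n+2)) * x)) :
    (prodPoly s).coeff (n+1) ^ 2 - (prodPoly s).coeff n * (prodPoly s).coeff (n+2) ≤
      6 / Real.sqrt V * (prodPoly s).coeff (n+1) ^ 2 := by
  set c := (prodPoly s).coeff with hc
  set t := c (n+1) / c (n+2) with ht
  have htp : 0 < t := div_pos h1 h2
  set s' := s.map fun x => t * x with hs'
  have hs0 : ∀ y ∈ s', 0 ≤ y := by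
    intro y hy
    obtain ⟨x, hx, rfl⟩ := Multiset.mem_map.1 hy
    exact mul_nonneg htp.le (hs x hx)
  have hsc : ∀ k, (prodPoly s').coeff k = t ^ k * c k := prodPoly_scale t s
  have heq : (prodPoly s').coeff (n+1) = (prodPoly s').coeff (n+1+1) := by
    rw [hsc, hsc, pow_succ t (n+1), ht]
    field_simp
  have hpos : 0 < (prodPoly s').coeff (n+1) := by rw [hsc]; positivity
  have hmax := prodPoly_unimodal s' hs0 (n+1) hpos heq
  have hV' : 1 ≤ mVar s' := hV.trans hVs
  have hlow := prodPoly_max_lower s' hs0 _ hmax hV'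
  have hdiff := prodPoly_diff s' hs0 (by linarith) n
  set W := mVar s'
  set M := (prodPoly s').coeff (n+1)
  have hsq : Real.sqrt W ^ 2 = W := Real.sq_sqrt (by linarith)
  have hW : 0 < Real.sqrt W := Real.sqrt_pos.2 (by linarith)
  have hVp : 0 < Real.sqrt V := Real.sqrt_pos.2 (by linarith)
  have hVW : Real.sqrt V ≤ Real.sqrt W := Real.sqrt_le_sqrt hVs
  have h3 : M - (prodPoly s').coeff n ≤ 6 / Real.sqrt V * M := by
    calc _ ≤ _ := hdiff
      _ ≤ 7 * Real.sqrt W * M * (Real.pi / (4 * W)) := by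
        apply mul_le_mul_of_nonneg_right hlow
        have := Real.pi_pos
        positivity
      _ = (7 * Real.pi / 4) / Real.sqrt W * M := by
        have : 7 * Real.sqrt W * M * (Real.pi / (4 * W)) = 
          (7 * Real.pi / 4) * (Real.sqrt W / W) * M := by ring
        rw [this, Real.sqrt_div_self]; ring
      _ ≤ 6 / Real.sqrt W * M := by
        gcongr
        linarith [Real.pi_lt_d2]
      _ ≤ _ := by gcongr
  have e1 : t ^ (n+1) * c (n+1) - t ^ n * c n ≤ 6 / Real.sqrt V * (t ^ (n+1) * c (n+1)) := by
    have := h3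
    simp only [M, hsc] at this
    exact this
  have e2 : t ^ n * (t * c (n+1) - c n) ≤ t ^ n * (6 / Real.sqrt V * (t * c (n+1))) := by
    calc _ = t ^ (n+1) * c (n+1) - t ^ n * c n := by ring
      _ ≤ _ := e1
      _ = _ := by ring
  have e3 := le_of_mul_le_mul_left e2 (by positivity)
  have e4 := mul_le_mul_of_nonneg_right e3 h2.le
  have e5 : t * c (n+2) = c (n+1) := by rw [ht]; field_simp
  calc _ = (t * c (n+1) - c n) * c (n+2) := by
        rw [sub_mul, mul_right_comm, e5]; ring
    _ ≤ _ := e4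
    _ = 6 / Real.sqrt V * ((t * c (n+2)) * c (n+1)) := by ring
    _ = _ := by rw [e5]; ring

/-- Dividing out a pair of zeros of an even entire function. -/
lemma even_div_one (f : ℂ → ℂ) (hf : Differentiable ℂ f) (he : ∀ z, f (-z) = f z)
    (a : ℂ) (ha : a ≠ 0) (hfa : f a = 0) :
    ∃ q : ℂ → ℂ, Differentiable ℂ q ∧ (∀ z, q (-z) = q z) ∧ 
      ∀ z, f z = (1 - z ^ 2 / a ^ 2) * q z := by
  have hd : ∀ (g : ℂ → ℂ) (b : ℂ), Differentiable ℂ g → Differentiable ℂ (dslope g b) := by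
    intro g b hg
    rw [← differentiableOn_univ]
    exact (Complex.differentiableOn_dslope (by simp)).2 hg.differentiableOn
  set g := dslope f a with hg
  have e1 : ∀ z, f z = (z - a) * g z := by
    intro z
    have := sub_smul_dslope f a z
    rw [hfa, sub_zero] at this
    rw [← this]; rfl
  have hga : g (-a) = 0 := by
    have h1 := e1 (-a)
    rw [he, hfa] at h1
    have h2 : -a - a ≠ 0 := by
      intro h; apply ha; linear_combination (-1/2) * h
    exact (mul_eq_zero.1 h1.symm).resolve_left h2
  set k := dslope g (-a) with hk
  have e2 : ∀ z, g z = (z + a) * k z := by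
    intro z
    have := sub_smul_dslope g (-a) z
    rw [hga, sub_zero, sub_neg_eq_add] at this
    rw [← this]; rfl
  have hkd : Differentiable ℂ k := hd _ _ (hd _ _ hf)
  have e3 : ∀ z, f z = (1 - z ^ 2 / a ^ 2) * (-(a ^ 2) * k z) := by
    intro z
    rw [e1, e2]; field_simp; ring
  refine ⟨fun z => -(a ^ 2) * k z, by fun_prop, ?_, e3⟩
  -- evenness by continuity
  have hset : ∀ z, z ^ 2 ≠ a ^ 2 → k (-z) = k z := by
    intro z hz
    have h1 := e3 z
    have h2 := e3 (-z)
    rw [he, h1] at h2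
    have h3 : (1 - z ^ 2 / a ^ 2) ≠ 0 := by
      intro h; apply hz; field_simp at h; linear_combination -h
    have h4 : (-(a^2)) ≠ 0 := by simpa using ha
    rw [neg_sq] at h2
    exact (mul_left_cancel₀ h4 (mul_left_cancel₀ h3 h2)).symm
  have hdense : Dense {z : ℂ | z ^ 2 ≠ a ^ 2} := by
    have : {z : ℂ | z ^ 2 ≠ a ^ 2} = ({a, -a} : Set ℂ)ᶜ := by
      ext z; simp [sq_eq_sq_iff_eq_or_eq_neg]
    rw [this]
    exact (Set.toFinite ({a, -a} : Set ℂ)).countable.dense_compl ℂ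
  have : (fun z => k (-z)) = k := by
    apply Continuous.ext_on hdense (hkd.continuous.comp continuous_neg) hkd.continuous
    intro z hz; exact hset z hz
  intro z
  simp only
  rw [congrFun this z]

/-- Dividing out a zero with multiplicity. -/
lemma even_div_pow (m : ℕ) (f : ℂ → ℂ) (hf : Differentiable ℂ f) (he : ∀ z, f (-z) = f z)
    (a : ℂ) (ha : a ≠ 0) (hfa : analyticOrderAt f a = m) :
    ∃ q : ℂ → ℂ, Differentiable ℂ q ∧ (∀ z, q (-z) = q z) ∧ q a ≠ 0 ∧
      ∀ z, f z = (1 - z ^ 2 / a ^ 2) ^ m * q z := by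
  induction m generalizing f with
  | zero =>
    refine ⟨f, hf, he, ?_, by simp⟩
    exact (hf.analyticAt a).analyticOrderAt_eq_zero.1 (by simpa using hfa)
  | succ m ih =>
    have h0 : f a = 0 := by
      by_contra h
      rw [(hf.analyticAt a).analyticOrderAt_eq_zero.2 h] at hfa
      exact_mod_cast hfa
    obtain ⟨q, hq, hqe, hfq⟩ := even_div_one f hf he a ha h0
    have hl : Differentiable ℂ (fun z : ℂ => 1 - z ^ 2 / a ^ 2) := by fun_prop
    have hord : analyticOrderAt (fun z : ℂ => 1 - z ^ 2 / a ^ 2) a = 1 := by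
      refine (analyticOrderAt_eq_nat_iff_iteratedDeriv_eq_zero (n := 1) (hl.analyticAt a)).2 ?_
      constructor
      · intro k hk
        have : k = 0 := by omega
        subst this
        simp [ha]
      · rw [iteratedDeriv_one]
        have : HasDerivAt (fun z : ℂ => 1 - z ^ 2 / a ^ 2) (-(2 * a / a ^ 2)) a := by
          have := ((hasDerivAt_pow 2 a).div_const (a ^ 2)).const_sub 1
          simpa using! this
        rw [this.deriv]
        simp [ha]
    have hfun : f = (fun z : ℂ => 1 - z ^ 2 / a ^ 2) * q := by
      ext z; exact hfq z
    have h1 : analyticOrderAt q a = m := by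
      rw [hfun, analyticOrderAt_mul (hl.analyticAt a) (hq.analyticAt a), hord] at hfa
      push_cast at hfa
      rw [add_comm] at hfa
      exact (ENat.addLECancellable_of_ne_top (a := 1) (by simp)).inj_left.1 hfa
    obtain ⟨q', hq', hqe', hqa', hfq'⟩ := ih q hq hqe h1
    refine ⟨q', hq', hqe', hqa', fun z => ?_⟩
    rw [hfq, hfq', pow_succ]; ring

lemma even_div_finset (f : ℂ → ℂ) (hf : Differentiable ℂ f) (he : ∀ z, f (-z) = f z)
    (m : ℝ → ℕ) (Z : Finset ℝ) (hZ : ∀ x ∈ Z, 0 < x)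
    (hm : ∀ x ∈ Z, analyticOrderAt f (x : ℂ) = m x) :
    ∃ q : ℂ → ℂ, Differentiable ℂ q ∧ (∀ z, q (-z) = q z) ∧ (∀ x ∈ Z, q (x : ℂ) ≠ 0) ∧
      ∀ z, f z = (∏ x ∈ Z, (1 - z ^ 2 / (x : ℂ) ^ 2) ^ m x) * q z := by
  classical
  induction Z using Finset.induction_on with
  | empty => exact ⟨f, hf, he, by simp, by simp⟩
  | insert a Z haZ ih =>
    obtain ⟨q, hq, hqe, hqZ, hfq⟩ := ih (fun x hx => hZ x (Finset.mem_insert_of_mem hx))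
      (fun x hx => hm x (Finset.mem_insert_of_mem hx))
    have hapos := hZ a (Finset.mem_insert_self a Z)
    have hP : Differentiable ℂ (fun z : ℂ => ∏ x ∈ Z, (1 - z ^ 2 / (x : ℂ) ^ 2) ^ m x) := by
      fun_prop
    have hPa : (∏ x ∈ Z, (1 - (a : ℂ) ^ 2 / (x : ℂ) ^ 2) ^ m x) ≠ 0 := by
      rw [Finset.prod_ne_zero_iff]
      intro x hx
      apply pow_ne_zero
      have hxpos := hZ x (Finset.mem_insert_of_mem hx)
      intro h
      have h1 : (1 : ℝ) - a ^ 2 / x ^ 2 = 0 := by exact_mod_cast h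
      have h2 : a ^ 2 = x ^ 2 := by field_simp at h1; linarith
      have h3 : a = x := by
        rwa [sq_eq_sq₀ hapos.le hxpos.le] at h2
      exact haZ (h3 ▸ hx)
    have hqa : analyticOrderAt q (a : ℂ) = m a := by
      have h1 := hm a (Finset.mem_insert_self a Z)
      have hfun : f = (fun z : ℂ => ∏ x ∈ Z, (1 - z ^ 2 / (x : ℂ) ^ 2) ^ m x) * q := by
        ext z; exact hfq z
      rw [hfun, analyticOrderAt_mul (hP.analyticAt _) (hq.analyticAt _),
        (hP.analyticAt _).analyticOrderAt_eq_zero.2 hPa, zero_add] at h1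
      exact h1
    obtain ⟨q', hq', hqe', hqa', hfq'⟩ := even_div_pow (m a) q hq hqe a
      (by exact_mod_cast hapos.ne') hqa
    refine ⟨q', hq', hqe', ?_, fun z => ?_⟩
    · intro x hx
      rcases Finset.mem_insert.1 hx with rfl | hx
      · exact hqa'
      · intro h
        apply hqZ x hx
        rw [hfq', h, mul_zero]
    · rw [hfq, hfq', Finset.prod_insert haZ]; ring

/-- A zero-free even entire function with a growth bound is close to constant near zero. -/
lemma even_zero_free (q : ℂ → ℂ) (hq : Differentiable ℂ q) (hqe : ∀ z, q (-z) = q z)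
    (R A : ℝ) (hR : 2 < R) (hA : 0 < A) (hz : ∀ z ∈ Metric.ball (0:ℂ) R, q z ≠ 0)
    (hb : ∀ z ∈ Metric.ball (0:ℂ) R, ‖q z‖ ≤ ‖q 0‖ * Real.exp A) :
    ∀ z : ℂ, ‖z‖ ≤ 1 → ∃ w : ℂ, ‖w‖ ≤ 8 * A / R ^ 2 ∧ q z = q 0 * Complex.exp w := by
  have hRpos : 0 < R := by linarith
  have hq' : Differentiable ℂ (deriv q) := fun z => (hq.analyticAt z).deriv.differentiableAt
  have hL : DifferentiableOn ℂ (fun z => deriv q z / q z) (Metric.ball 0 R) :=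
    (hq'.differentiableOn).div hq.differentiableOn hz
  obtain ⟨L, hL0, hLd⟩ := hL.isExactOn_ball.with_val_at 0 0
  have h0 : (0:ℂ) ∈ Metric.ball (0:ℂ) R := by simp [hRpos]
  have hq0 : q 0 ≠ 0 := hz 0 h0
  have hLdiff : DifferentiableOn ℂ L (Metric.ball 0 R) := fun z hzR =>
    (hLd z hzR).differentiableAt.differentiableWithinAt
  have hexp : ∀ z ∈ Metric.ball (0:ℂ) R, q z = q 0 * Complex.exp (L z) := by
    have hconst : ∀ z ∈ Metric.ball (0:ℂ) R, q z * Complex.exp (-(L z)) = 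
        q 0 * Complex.exp (-(L 0)) := by
      intro z hzR
      have hder : ∀ w ∈ Metric.ball (0:ℂ) R, 
          HasDerivAt (fun w => q w * Complex.exp (-(L w))) 0 w := by
        intro w hw
        have h1 := (hq w).hasDerivAt.mul ((hLd w hw).fun_neg.cexp)
        have hw0 := hz w hw
        have : deriv q w * Complex.exp (-(L w)) + 
          q w * (Complex.exp (-(L w)) * -(deriv q w / q w)) = 0 := by
          field_simp; ring
        rw [this] at h1
        exact h1
      exact (convex_ball (0:ℂ) R).is_const_of_fderivWithin_eq_zero (𝕜 := ℂ)
        (fun w hw => (hder w hw).differentiableAt.differentiableWithinAt)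
        (fun w hw => by
          rw [fderivWithin_of_isOpen Metric.isOpen_ball hw]
          have := (hder w hw).hasFDerivAt.fderiv
          rw [this]; ext; simp) hzR h0
    intro z hzR
    have := hconst z hzR
    rw [hL0, neg_zero, Complex.exp_zero, mul_one] at this
    rw [← this, mul_assoc, ← Complex.exp_add]; simp
  have hre : Set.MapsTo L (Metric.ball 0 R) {z | z.re ≤ A} := by
    intro z hzR
    have h1 := hb z hzR
    rw [hexp z hzR, norm_mul, Complex.norm_exp] at h1
    have h2 := le_of_mul_le_mul_left h1 (norm_pos_iff.2 hq0)
    exact Real.exp_le_exp.1 h2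
  have hbc : Set.MapsTo L (Metric.ball 0 (R/2)) (Metric.closedBall (L 0) (2 * A)) := by
    intro z hz2
    have hzn : ‖z‖ < R / 2 := by simpa using hz2
    have hzR : z ∈ Metric.ball (0:ℂ) R := by simp; linarith
    have := Complex.borelCaratheodory_zero hA hLdiff hre hRpos hzR hL0
    rw [hL0, mem_closedBall_zero_iff]
    refine this.trans ?_
    rw [div_le_iff₀ (by linarith)]
    nlinarith
  have hdq0 : deriv q 0 = 0 := by
    have h1 : deriv (fun z => q (-z)) 0 = - deriv q (-0) := deriv_comp_neg q 0
    have h2 : (fun z => q (-z)) = q := funext hqe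
    rw [h2, neg_zero] at h1
    linear_combination (1/2) * h1
  have hlo : (fun w => L w - L 0) =o[nhds (0:ℂ)] (fun w => ‖w - 0‖ ^ 1) := by
    have h1 := (hLd 0 h0).isLittleO
    simp only [hdq0, zero_div, smul_zero, sub_zero] at h1
    simpa using! h1.norm_right
  intro z hz1
  have hzR : z ∈ Metric.ball (0:ℂ) R := by simp; linarith
  refine ⟨L z, ?_, hexp z hzR⟩
  have h3 := Complex.dist_le_mul_div_pow_of_mapsTo_ball_of_isLittleO (n := 1) 
    (hLdiff.mono (Metric.ball_subset_ball (by linarith))) hbc hlo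
    (z := z) (by simp; linarith)
  rw [hL0, dist_zero_right, dist_zero_right] at h3
  refine h3.trans ?_
  have : 8 * A / R ^ 2 = 2 * A * (1 / (R / 2)) ^ (1 + 1) := by rw [div_div_eq_mul_div, div_pow]; ring
  rw [this]
  gcongr

lemma poly_iteratedDeriv (Q : Polynomial ℂ) (k : ℕ) :
    iteratedDeriv k (fun z => Q.eval z) = fun z => ((Polynomial.derivative)^[k] Q).eval z := by
  induction k with
  | zero => simp
  | succ k ih =>
    rw [iteratedDeriv_succ, ih, Function.iterate_succ_apply']
    ext z
    exact Polynomial.deriv _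

lemma poly_iteratedDeriv_even (p : Polynomial ℝ) (n : ℕ) :
    iteratedDeriv (2 * n) (fun z : ℂ => (p.map (algebraMap ℝ ℂ)).eval (-z ^ 2)) 0 =
      ((2 * n).factorial : ℂ) * ((-1) ^ n * (p.coeff n : ℂ)) := by
  set Q : Polynomial ℂ := Polynomial.expand ℂ 2 ((p.map (algebraMap ℝ ℂ)).comp (-Polynomial.X))
    with hQ
  have h1 : (fun z : ℂ => (p.map (algebraMap ℝ ℂ)).eval (-z ^ 2)) = fun z => Q.eval z := by
    ext z
    rw [hQ, Polynomial.expand_eval]; simp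
  rw [h1, poly_iteratedDeriv]
  simp only
  rw [← Polynomial.coeff_zero_eq_eval_zero, Polynomial.coeff_iterate_derivative, zero_add,
    Nat.descFactorial_self, hQ, mul_comm 2 n, Polynomial.coeff_expand_mul (by norm_num),
    show (-Polynomial.X : Polynomial ℂ) = Polynomial.C (-1) * Polynomial.X by simp,
    Polynomial.comp_C_mul_X_coeff, Polynomial.coeff_map, nsmul_eq_mul]
  simp [mul_comm]

lemma prodPoly_add (s u : Multiset ℝ) : prodPoly (s + u) = prodPoly s * prodPoly u := by
  simp [prodPoly]

section
variable {f : ℂ → ℂ} {α : ℝ} {h : ℝ → ℝ}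

lemma AssumptionA.zeros_finite (hf : AssumptionA f α h) (R : ℝ) :
    {z : ℂ | f z = 0 ∧ ‖z‖ ≤ R}.Finite := by
  by_contra hinf
  have hinf : {z : ℂ | f z = 0 ∧ ‖z‖ ≤ R}.Infinite := hinf
  obtain ⟨x, _, hx⟩ := hinf.exists_accPt_of_subset_isCompact
    (isCompact_closedBall (0:ℂ) R) (fun z hz => by simpa using hz.2)
  have hfr : ∃ᶠ z in nhdsWithin x {x}ᶜ, f z = (fun _ => (0:ℂ)) z :=
    (accPt_iff_frequently_nhdsNE.1 hx).mono (fun z hz => hz.1)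
  have han : AnalyticOnNhd ℂ f Set.univ := fun z _ => hf.entire.analyticAt z
  have := AnalyticOnNhd.eq_of_frequently_eq han (fun z _ => analyticAt_const) hfr
  exact hf.ne_zero (congrFun this 0)

lemma AssumptionA.order_eq (hf : AssumptionA f α h) (z : ℂ) :
    analyticOrderAt f z = (zeroMult f z : ℕ) := by
  have hne : analyticOrderAt f z ≠ ⊤ := by
    intro htop
    rw [analyticOrderAt_eq_top] at htop
    have han : AnalyticOnNhd ℂ f Set.univ := fun z _ => hf.entire.analyticAt z
    have := AnalyticOnNhd.eq_of_eventuallyEq (g := fun _ => 0) han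
      (fun z _ => analyticAt_const) htop
    exact hf.ne_zero (congrFun this 0)
  obtain ⟨n, hn⟩ := ENat.ne_top_iff_exists.1 hne
  have h1 := (analyticOrderAt_eq_nat_iff_iteratedDeriv_eq_zero (hf.entire.analyticAt z)).1 hn.symm
  have : zeroMult f z = n := by
    unfold zeroMult
    apply le_antisymm
    · exact Nat.sInf_le h1.2
    · apply le_csInf ⟨n, h1.2⟩
      intro k hk
      by_contra hlt
      exact hk (h1.1 k (by omega))
  rw [this, hn]

lemma AssumptionA.real_zeros_finite (hf : AssumptionA f α h) (R : ℝ) :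
    {x : ℝ | 0 ≤ x ∧ x ≤ R ∧ f (x : ℂ) = 0}.Finite := by
  refine Set.Finite.of_finite_image ((hf.zeros_finite R).subset ?_)
    (f := fun x : ℝ => (x : ℂ)) Complex.ofReal_injective.injOn
  rintro _ ⟨x, hx, rfl⟩
  refine ⟨hx.2.2, ?_⟩
  rw [Complex.norm_real, Real.norm_eq_abs, abs_of_nonneg hx.1]; exact hx.2.1

/-- The finset of zeros in `[0, R]`. -/
noncomputable def AssumptionA.Z (hf : AssumptionA f α h) (R : ℝ) : Finset ℝ :=
  (hf.real_zeros_finite R).toFinset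

lemma AssumptionA.mem_Z (hf : AssumptionA f α h) (R x : ℝ) :
    x ∈ hf.Z R ↔ 0 ≤ x ∧ x ≤ R ∧ f (x : ℂ) = 0 := by
  simp [AssumptionA.Z]

lemma AssumptionA.Z_pos (hf : AssumptionA f α h) (R x : ℝ) (hx : x ∈ hf.Z R) : 0 < x := by
  obtain ⟨h1, _, h3⟩ := (hf.mem_Z R x).1 hx
  rcases h1.lt_or_eq with h | h
  · exact h
  · subst h; exact absurd (by simpa using h3) hf.ne_zero

lemma AssumptionA.Z_mono (hf : AssumptionA f α h) {r R : ℝ} (hr : r ≤ R) : hf.Z r ⊆ hf.Z R := by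
  intro x hx
  rw [hf.mem_Z] at hx ⊢
  exact ⟨hx.1, hx.2.1.trans hr, hx.2.2⟩

lemma AssumptionA.nPlus_eq (hf : AssumptionA f α h) (R : ℝ) :
    nPlus f R = ∑ x ∈ hf.Z R, (zeroMult f (x : ℂ) : ℝ) := by
  have h1 := Finset.tsum_subtype' (hf.Z R) (fun x : ℝ => (zeroMult f (x : ℂ) : ℝ))
  rw [← h1]
  unfold nPlus
  have h2 : ((hf.Z R : Finset ℝ) : Set ℝ) = {x : ℝ | 0 ≤ x ∧ x ≤ R ∧ f (x : ℂ) = 0} := by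
    ext x; simp [hf.mem_Z]
  rw [h2]; rfl

/-- The multiset of `x⁻²`, over positive zeros up to `R`. -/
noncomputable def AssumptionA.S (hf : AssumptionA f α h) (R : ℝ) : Multiset ℝ :=
  ∑ x ∈ hf.Z R, zeroMult f (x : ℂ) • ({(x ^ 2)⁻¹} : Multiset ℝ)

lemma AssumptionA.S_pos (hf : AssumptionA f α h) (R : ℝ) : ∀ y ∈ hf.S R, 0 < y := by
  intro y hy
  unfold AssumptionA.S at hy
  rw [Multiset.mem_sum] at hy
  obtain ⟨x, hx, hy⟩ := hy
  have := Multiset.mem_of_mem_nsmul hy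
  rw [Multiset.mem_singleton] at this
  have := hf.Z_pos R x hx
  subst y
  positivity

lemma AssumptionA.S_card (hf : AssumptionA f α h) (R : ℝ) : ((hf.S R).card : ℝ) = nPlus f R := by
  rw [hf.nPlus_eq]
  unfold AssumptionA.S
  simp

lemma AssumptionA.S_mono (hf : AssumptionA f α h) {r R : ℝ} (hr : r ≤ R) :
    hf.S R = (∑ x ∈ hf.Z R \ hf.Z r, zeroMult f (x : ℂ) • ({(x ^ 2)⁻¹} : Multiset ℝ)) + hf.S r := by
  unfold AssumptionA.S
  rw [Finset.sum_sdiff (hf.Z_mono hr)]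

lemma AssumptionA.S_poly (hf : AssumptionA f α h) (R : ℝ) (z : ℂ) :
    ((prodPoly (hf.S R)).map (algebraMap ℝ ℂ)).eval (-z ^ 2) =
      ∏ x ∈ hf.Z R, (1 - z ^ 2 / (x : ℂ) ^ 2) ^ zeroMult f (x : ℂ) := by
  classical
  have hpow : ∀ (m : ℕ) (y : ℝ), prodPoly (m • ({y} : Multiset ℝ)) =
      (1 + Polynomial.C y * Polynomial.X) ^ m := by
    intro m y
    simp [prodPoly, Multiset.map_nsmul, Multiset.prod_nsmul]
  have : ∀ Z : Finset ℝ, prodPoly (∑ x ∈ Z, zeroMult f (x : ℂ) • ({(x ^ 2)⁻¹} : Multiset ℝ)) =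
      ∏ x ∈ Z, (1 + Polynomial.C ((x ^ 2)⁻¹) * Polynomial.X) ^ zeroMult f (x : ℂ) := by
    intro Z
    induction Z using Finset.induction_on with
    | empty => simp [prodPoly_zero]
    | insert a Z ha ih =>
      rw [Finset.sum_insert ha, Finset.prod_insert ha, prodPoly_add, ih, hpow]
  unfold AssumptionA.S
  rw [this, Polynomial.map_prod, Polynomial.eval_prod]
  refine Finset.prod_congr rfl fun x _ => ?_
  simp
  congr 1
  ring

lemma AssumptionA.S_var (hf : AssumptionA f α h) (R t : ℝ) (ht : 0 < t)
    (hR : 2 * Real.sqrt t ≤ R) :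
    (nPlus f (2 * Real.sqrt t) - nPlus f (Real.sqrt t)) / 16 ≤
      mVar ((hf.S R).map fun x => t * x) := by
  set r := Real.sqrt t with hr
  have hrp : 0 < r := Real.sqrt_pos.2 ht
  have hr2 : r ^ 2 = t := Real.sq_sqrt ht.le
  have e : mVar ((hf.S R).map fun x => t * x) = ∑ x ∈ hf.Z R, (zeroMult f (x : ℂ) : ℝ) *
      ((t * (x ^ 2)⁻¹) / (1 + t * (x ^ 2)⁻¹) ^ 2) := by
    classical
    unfold AssumptionA.S mVar
    generalize hf.Z R = Z
    induction Z using Finset.induction_on with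
    | empty => simp
    | insert a Z ha ih =>
      rw [Finset.sum_insert ha, Finset.sum_insert ha, Multiset.map_add, Multiset.map_add,
        Multiset.sum_add, ih]
      simp [Multiset.map_nsmul, Multiset.sum_nsmul, nsmul_eq_mul]
  classical
  rw [e, hf.nPlus_eq, hf.nPlus_eq, 
    ← Finset.sum_sdiff (hf.Z_mono (show r ≤ 2 * r by linarith)), add_sub_cancel_right,
    Finset.sum_div]
  have hsub : hf.Z (2 * r) \ hf.Z r ⊆ hf.Z R := Finset.sdiff_subset.trans (hf.Z_mono hR)
  refine le_trans (Finset.sum_le_sum (g := fun x : ℝ => (zeroMult f (x : ℂ) : ℝ) *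
      ((t * (x ^ 2)⁻¹) / (1 + t * (x ^ 2)⁻¹) ^ 2)) ?_)
      (Finset.sum_le_sum_of_subset_of_nonneg hsub ?_)
  · intro x hx
    rw [Finset.mem_sdiff] at hx
    have hxp := hf.Z_pos _ x hx.1
    have h1 := (hf.mem_Z _ x).1 hx.1
    have h2 : r < x := by
      by_contra hle
      exact hx.2 ((hf.mem_Z _ x).2 ⟨h1.1, not_lt.1 hle, h1.2.2⟩)
    rw [div_eq_mul_one_div]
    refine mul_le_mul_of_nonneg_left ?_ (Nat.cast_nonneg _)
    have hy1 : 1 / 4 ≤ t * (x ^ 2)⁻¹ := by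
      rw [← div_eq_mul_inv, le_div_iff₀ (by positivity), ← hr2]
      nlinarith [h1.2.1]
    have hy2 : t * (x ^ 2)⁻¹ ≤ 1 := by
      rw [← div_eq_mul_inv, div_le_one (by positivity), ← hr2]
      nlinarith
    rw [div_le_div_iff₀ (by norm_num) (by positivity)]
    nlinarith
  · intro x hx _
    have := hf.Z_pos _ x hx
    positivity
end

section
variable {f : ℂ → ℂ} {α : ℝ} {h : ℝ → ℝ}

lemma AssumptionA.factor (hf : AssumptionA f α h) (ρ C : ℝ) (hC : 0 < C)
    (hb : ∀ z, ‖f z‖ ≤ C * Real.exp (‖z‖ ^ ρ)) (R : ℝ) (hR : 2 < R) (z : ℂ) (hz : ‖z‖ ≤ 1) :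
    ∃ w : ℂ, ‖w‖ ≤ 8 * (|Real.log (C / ‖f 0‖)| + (2 * R) ^ ρ) / R ^ 2 ∧
      f z = ((prodPoly (hf.S R)).map (algebraMap ℝ ℂ)).eval (-z ^ 2) * (f 0 * Complex.exp w) := by
  obtain ⟨q, hq, hqe, hqz, hfq⟩ := even_div_finset f hf.entire hf.even
    (fun x => zeroMult f (x : ℂ)) (hf.Z R) (hf.Z_pos R) (fun x _ => hf.order_eq _)
  have hq0 : q 0 = f 0 := by
    have := hfq 0
    simp at this
    exact this.symm
  have hf0 : 0 < ‖f 0‖ := norm_pos_iff.2 hf.ne_zero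
  have hApos : 0 < |Real.log (C / ‖f 0‖)| + (2 * R) ^ ρ :=
    add_pos_of_nonneg_of_pos (abs_nonneg _) (Real.rpow_pos_of_pos (by linarith) _)
  -- zero-free
  have hzf : ∀ z ∈ Metric.ball (0:ℂ) R, q z ≠ 0 := by
    intro z hz h0
    have hfz : f z = 0 := by rw [hfq z, h0, mul_zero]
    have him := hf.realZeros z hfz
    have hzr : z = (z.re : ℂ) := by apply Complex.ext <;> simp [him]
    have hzn : |z.re| < R := by
      rw [mem_ball_zero_iff] at hz
      exact (Complex.abs_re_le_norm z).trans_lt hz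
    rcases le_total 0 z.re with hs | hs
    · refine hqz z.re ((hf.mem_Z _ _).2 ⟨hs, ?_, ?_⟩) ?_
      · rw [abs_of_nonneg hs] at hzn; exact hzn.le
      · rw [← hzr]; exact hfz
      · rw [← hzr]; exact h0
    · refine hqz (-z.re) ((hf.mem_Z _ _).2 ⟨by linarith, ?_, ?_⟩) ?_
      · rw [abs_of_nonpos hs] at hzn; exact hzn.le
      · rw [Complex.ofReal_neg, ← hzr, hf.even]; exact hfz
      · rw [Complex.ofReal_neg, ← hzr, hqe]; exact h0
  have hfront : ∀ z ∈ frontier (Metric.ball (0:ℂ) (2 * R)), ‖q z‖ ≤ C * Real.exp ((2 * R) ^ ρ) := by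
    intro z hz
    rw [frontier_ball _ (by linarith), mem_sphere_zero_iff_norm] at hz
    have h1 := hb z
    rw [hz] at h1
    refine le_trans ?_ h1
    rw [hfq z, norm_mul, norm_prod]
    refine le_mul_of_one_le_left (norm_nonneg _) ?_
    refine Finset.prod_induction _ (fun y : ℝ => 1 ≤ y) (fun a b ha hb => one_le_mul_of_one_le_of_one_le ha hb) le_rfl ?_
    intro x hx
    rw [norm_pow]
    refine one_le_pow₀ ?_
    have hxp := hf.Z_pos R x hx
    have hxR := ((hf.mem_Z R x).1 hx).2.1
    have h2 : ‖z ^ 2 / (x:ℂ) ^ 2‖ - ‖(1:ℂ)‖ ≤ ‖1 - z ^ 2 / (x:ℂ) ^ 2‖ := by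
      rw [norm_sub_rev]; exact norm_sub_norm_le _ _
    rw [norm_div, norm_pow, norm_pow, hz, Complex.norm_real, Real.norm_eq_abs, abs_of_pos hxp,
      norm_one] at h2
    have h3 : 4 ≤ (2 * R) ^ 2 / x ^ 2 := by
      rw [le_div_iff₀ (by positivity)]; nlinarith
    linarith
  have hbd : ∀ z ∈ Metric.ball (0:ℂ) R, ‖q z‖ ≤ ‖q 0‖ *
      Real.exp (|Real.log (C / ‖f 0‖)| + (2 * R) ^ ρ) := by
    intro z hz
    have h1 := Complex.norm_le_of_forall_mem_frontier_norm_le (Metric.isBounded_ball)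
      hq.diffContOnCl hfront (subset_closure (Metric.ball_subset_ball (by linarith) hz))
    refine h1.trans ?_
    rw [Real.exp_add, ← mul_assoc, hq0]
    refine mul_le_mul_of_nonneg_right ?_ (Real.exp_pos _).le
    have h2 : C / ‖f 0‖ ≤ Real.exp |Real.log (C / ‖f 0‖)| := by
      calc C / ‖f 0‖ = Real.exp (Real.log (C / ‖f 0‖)) := (Real.exp_log (by positivity)).symm
        _ ≤ _ := Real.exp_le_exp.2 (le_abs_self _)
    rw [div_le_iff₀ hf0] at h2
    linarith
  obtain ⟨w, hw, hqw⟩ := even_zero_free q hq hqe R _ hR hApos hzf hbd z hz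
  refine ⟨w, hw, ?_⟩
  rw [hf.S_poly, ← hq0, ← hqw]
  exact hfq z

lemma AssumptionA.coeff_bound (hf : AssumptionA f α h) (ρ C : ℝ) (hC : 0 < C)
    (hb : ∀ z, ‖f z‖ ≤ C * Real.exp (‖z‖ ^ ρ)) (R : ℝ) (hR : 2 < R)
    (hδ : 8 * (|Real.log (C / ‖f 0‖)| + (2 * R) ^ ρ) / R ^ 2 ≤ 1) (n : ℕ) :
    ‖f 0 * (((2 * n).factorial : ℂ) * ((-1) ^ n * ((prodPoly (hf.S R)).coeff n : ℂ)))
      - gam f (2 * n)‖ ≤ (2 * n).factorial * (C * Real.exp 1 *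
        (2 * (8 * (|Real.log (C / ‖f 0‖)| + (2 * R) ^ ρ) / R ^ 2))) := by
  set δ := 8 * (|Real.log (C / ‖f 0‖)| + (2 * R) ^ ρ) / R ^ 2 with hδd
  set P : ℂ → ℂ := fun z => ((prodPoly (hf.S R)).map (algebraMap ℝ ℂ)).eval (-z ^ 2) with hP
  have hPd : Differentiable ℂ P := by
    have h1 : Differentiable ℂ (fun z : ℂ => -z ^ 2) := by fun_prop
    exact (Polynomial.differentiable ((prodPoly (hf.S R)).map (algebraMap ℝ ℂ))).comp h1
  have hPd' : ContDiff ℂ (2 * n : ℕ) P := hPd.contDiff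
  have hfd' : ContDiff ℂ (2 * n : ℕ) f := hf.entire.contDiff
  set G : ℂ → ℂ := fun z => f 0 * P z - f z with hG
  have hGd : Differentiable ℂ G := (hPd.const_mul _).sub hf.entire
  have e : iteratedDeriv (2 * n) G 0 =
      f 0 * (((2 * n).factorial : ℂ) * ((-1) ^ n * ((prodPoly (hf.S R)).coeff n : ℂ)))
      - gam f (2 * n) := by
    rw [← poly_iteratedDeriv_even, gam, ← iteratedDeriv_const_mul_field]
    have : G = (fun z => f 0 * P z) - f := rfl
    rw [this, iteratedDeriv_sub]
    · exact (contDiff_const.mul hPd').contDiffAt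
    · exact hfd'.contDiffAt
  rw [← e]
  have := Complex.norm_iteratedDeriv_le_of_forall_mem_sphere_norm_le (f := G) (c := 0) (R := 1)
    (C := C * Real.exp 1 * (2 * δ)) (2 * n) one_pos hGd.diffContOnCl ?_
  · simpa [mul_div_assoc] using this
  intro z hz
  rw [mem_sphere_zero_iff_norm] at hz
  obtain ⟨w, hw, hfw⟩ := hf.factor ρ C hC hb R hR z hz.le
  have h1 : G z = f z * (Complex.exp (-w) - 1) := by
    have : f z * Complex.exp (-w) = f 0 * P z := by
      rw [hfw, Complex.exp_neg]
      field_simp [Complex.exp_ne_zero]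
      exact mul_comm _ _
    rw [mul_sub, this, mul_one]
  rw [h1, norm_mul]
  have h2 := hb z
  rw [hz, Real.one_rpow] at h2
  refine mul_le_mul h2 ?_ (norm_nonneg _) (by positivity)
  refine (Complex.norm_exp_sub_one_le (by rw [norm_neg]; exact hw.trans hδ)).trans ?_
  rw [norm_neg]; linarith

/-- the normalised coefficients -/
noncomputable def AssumptionA.c (_hf : AssumptionA f α h) (n : ℕ) : ℂ :=
  (-1) ^ n * gam f (2 * n) / ((2 * n).factorial * f 0)

lemma AssumptionA.coeff_tendsto (hf : AssumptionA f α h) (n : ℕ) :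
    Tendsto (fun R => ((prodPoly (hf.S R)).coeff n : ℂ)) atTop (nhds (hf.c n)) := by
  obtain ⟨ρ, hρ, C, hC, hb⟩ := hf.order
  set δ : ℝ → ℝ := fun R => 8 * (|Real.log (C / ‖f 0‖)| + (2 * R) ^ ρ) / R ^ 2 with hδ
  have hδ0 : Tendsto δ atTop (nhds 0) := by
    have h1 : Tendsto (fun R : ℝ => R ^ (-(2 - ρ))) atTop (nhds 0) :=
      tendsto_rpow_neg_atTop (by linarith)
    have h2 : Tendsto (fun R : ℝ => R ^ (-(2:ℝ))) atTop (nhds 0) :=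
      tendsto_rpow_neg_atTop (by norm_num)
    have h3 := (h2.const_mul (8 * |Real.log (C / ‖f 0‖)|)).add (h1.const_mul (8 * 2 ^ ρ))
    simp only [mul_zero, add_zero] at h3
    refine h3.congr' ?_
    filter_upwards [eventually_gt_atTop 0] with R hR
    simp only [hδ]
    rw [Real.mul_rpow (by norm_num) hR.le, neg_sub, Real.rpow_sub hR, Real.rpow_neg hR.le]
    norm_num [Real.rpow_two]
    ring
  have hδ1 : ∀ᶠ R in atTop, δ R ≤ 1 := hδ0.eventually (ge_mem_nhds one_pos)
  have hf0 : f 0 ≠ 0 := hf.ne_zero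
  have hfac : ((2 * n).factorial : ℂ) ≠ 0 := by exact_mod_cast (Nat.factorial_ne_zero _)
  have h1 : Tendsto (fun R => f 0 * (((2 * n).factorial : ℂ) *
      ((-1) ^ n * ((prodPoly (hf.S R)).coeff n : ℂ)))) atTop (nhds (gam f (2 * n))) := by
    rw [tendsto_iff_norm_sub_tendsto_zero]
    have h4 : Tendsto (fun R => ((2 * n).factorial : ℝ) * (C * Real.exp 1 * (2 * δ R))) atTop
        (nhds 0) := by
      have := ((hδ0.const_mul 2).const_mul (C * Real.exp 1)).const_mul ((2 * n).factorial : ℝ)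
      simpa using this
    refine squeeze_zero' (Eventually.of_forall fun _ => norm_nonneg _) ?_ h4
    filter_upwards [hδ1, eventually_gt_atTop 2] with R hR hR2
    exact hf.coeff_bound ρ C hC hb R hR2 hR n
  have h2 := (h1.const_mul ((-1) ^ n)).div_const (((2 * n).factorial : ℂ) * f 0)
  refine h2.congr fun R => ?_
  have h5 : ((-1 : ℂ) ^ n) * (-1) ^ n = 1 := by rw [← mul_pow]; simp
  field_simp
  linear_combination ((prodPoly (hf.S R)).coeff n : ℂ) * h5

lemma AssumptionA.c_real (hf : AssumptionA f α h) (n : ℕ) : hf.c n = ((hf.c n).re : ℂ) := by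
  have h1 := (Complex.continuous_im.tendsto _).comp (hf.coeff_tendsto n)
  have h2 : (hf.c n).im = 0 := by
    refine tendsto_nhds_unique h1 ?_
    refine tendsto_const_nhds.congr fun R => ?_
    simp
  apply Complex.ext <;> simp [h2]

lemma AssumptionA.coeff_tendsto' (hf : AssumptionA f α h) (n : ℕ) :
    Tendsto (fun R => (prodPoly (hf.S R)).coeff n) atTop (nhds (hf.c n).re) := by
  have h1 := (Complex.continuous_re.tendsto _).comp (hf.coeff_tendsto n)
  exact h1.congr fun R => by simp

end

section
variable {f : ℂ → ℂ} {α : ℝ} {h : ℝ → ℝ}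

lemma AssumptionA.nPlus_mono (hf : AssumptionA f α h) : Monotone (nPlus f) := by
  intro r R hr
  rw [hf.nPlus_eq, hf.nPlus_eq]
  exact Finset.sum_le_sum_of_subset_of_nonneg (hf.Z_mono hr) fun _ _ _ => Nat.cast_nonneg _

lemma AssumptionA.nPlus_growth (hf : AssumptionA f α h) :
    ∃ q > (1:ℝ), ∃ r₀ > (0:ℝ), ∀ r ≥ r₀, 0 < nPlus f r ∧ q * nPlus f r ≤ nPlus f (2 * r) := by
  have h2a : (1:ℝ) < 2 ^ α := Real.one_lt_rpow (by norm_num) hf.alpha_mem.1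
  have hd := hf.density
  have hd2 : Tendsto (fun r : ℝ => nPlus f (2 * r) / (h (2 * r) * (2 * r) ^ α)) atTop (nhds 1) :=
    hd.comp (tendsto_id.const_mul_atTop (by norm_num : (0:ℝ) < 2))
  have hs := hf.slowly.2 2 (by norm_num)
  have hpos : ∀ᶠ r in atTop, 0 < nPlus f r / (h r * r ^ α) := hd.eventually (lt_mem_nhds one_pos)
  have hlim : Tendsto (fun r => nPlus f (2 * r) / nPlus f r) atTop (nhds (2 ^ α)) := by
    have h3 := ((hd2.div hd one_ne_zero).mul hs).mul_const (2 ^ α)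
    simp only [div_one, one_mul] at h3
    refine h3.congr' ?_
    filter_upwards [hpos, eventually_gt_atTop 0] with r hr hr0
    have e1 := hf.slowly.1 r hr0
    have e2 := hf.slowly.1 (2 * r) (by linarith)
    have e3 : 0 < r ^ α := Real.rpow_pos_of_pos hr0 _
    have e4 : nPlus f r ≠ 0 := by
      intro h0; rw [h0, zero_div] at hr; exact lt_irrefl _ hr
    have e5 : (0:ℝ) < 2 ^ α := by linarith
    simp only [Pi.div_apply]
    rw [Real.mul_rpow (by norm_num) hr0.le]
    field_simp
  obtain ⟨q, hq1, hq2⟩ := exists_between h2a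
  have hev := hlim.eventually (lt_mem_nhds hq2)
  obtain ⟨r₀, hr₀⟩ := eventually_atTop.1 ((hev.and hpos).and (eventually_gt_atTop (0:ℝ)))
  refine ⟨q, hq1, r₀, (hr₀ r₀ le_rfl).2, fun r hr => ?_⟩
  obtain ⟨⟨h1, h2⟩, h3⟩ := hr₀ r hr
  have e1 := hf.slowly.1 r h3
  have e3 : 0 < r ^ α := Real.rpow_pos_of_pos h3 _
  have e4 : 0 < nPlus f r := by
    have := mul_pos h2 (mul_pos e1 e3)
    rwa [div_mul_cancel₀ _ (by positivity)] at this
  refine ⟨e4, ?_⟩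
  rw [lt_div_iff₀ e4] at h1
  exact h1.le

lemma AssumptionA.nPlus_tendsto (hf : AssumptionA f α h) : Tendsto (nPlus f) atTop atTop := by
  obtain ⟨q, hq, r₀, hr₀, hg⟩ := hf.nPlus_growth
  refine tendsto_atTop_atTop_of_monotone hf.nPlus_mono fun b => ?_
  have key : ∀ k : ℕ, q ^ k * nPlus f r₀ ≤ nPlus f (2 ^ k * r₀) := by
    intro k
    induction k with
    | zero => simp
    | succ k ih =>
      have h1 : r₀ ≤ 2 ^ k * r₀ := le_mul_of_one_le_left hr₀.le (one_le_pow₀ (by norm_num))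
      have h2 := (hg _ h1).2
      calc q ^ (k+1) * nPlus f r₀ = q * (q ^ k * nPlus f r₀) := by ring
        _ ≤ q * nPlus f (2 ^ k * r₀) := mul_le_mul_of_nonneg_left ih (by linarith)
        _ ≤ nPlus f (2 * (2 ^ k * r₀)) := h2
        _ = _ := by congr 1; ring
  have ht := (tendsto_pow_atTop_atTop_of_one_lt hq).atTop_mul_const (hg r₀ le_rfl).1
  obtain ⟨k, hk⟩ := (ht.eventually_ge_atTop b).exists
  exact ⟨_, hk.trans (key k)⟩

lemma AssumptionA.nPlus_diff (hf : AssumptionA f α h) (V : ℝ) :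
    ∃ r₀, ∀ r ≥ r₀, V ≤ (nPlus f (2 * r) - nPlus f r) / 16 := by
  obtain ⟨q, hq, r₀, hr₀, hg⟩ := hf.nPlus_growth
  have ht := (hf.nPlus_tendsto.const_mul_atTop (sub_pos.2 hq)).eventually_ge_atTop (16 * V)
  obtain ⟨r₁, hr₁⟩ := eventually_atTop.1 ht
  refine ⟨max r₀ r₁, fun r hr => ?_⟩
  have h1 := (hg r ((le_max_left _ _).trans hr)).2
  have h2 := hr₁ r ((le_max_right _ _).trans hr)
  linarith

/-- real normalised coefficients -/
noncomputable def AssumptionA.cr (hf : AssumptionA f α h) (n : ℕ) : ℝ := (hf.c n).re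

lemma AssumptionA.cr_ge (hf : AssumptionA f α h) (n : ℕ) (r : ℝ) :
    (prodPoly (hf.S r)).coeff n ≤ hf.cr n := by
  refine ge_of_tendsto (hf.coeff_tendsto' n) ?_
  filter_upwards [eventually_ge_atTop r] with R hR
  have hm := hf.S_mono hR
  have hp := fun y hy => (hf.S_pos R y hy).le
  rw [hm] at hp ⊢
  exact prodPoly_coeff_mono _ _ (fun y hy => (hf.S_pos r y hy).le)
    (fun y hy => hp y (Multiset.mem_add.2 (Or.inl hy))) n

lemma AssumptionA.cr_pos (hf : AssumptionA f α h) (n : ℕ) : 0 < hf.cr n := by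
  obtain ⟨r, hr⟩ := (hf.nPlus_tendsto.eventually_ge_atTop (n:ℝ)).exists
  refine lt_of_lt_of_le ?_ (hf.cr_ge n r)
  refine prodPoly_coeff_pos _ (hf.S_pos r) n ?_
  rw [← hf.S_card] at hr
  exact_mod_cast hr

lemma AssumptionA.cr_logConcave (hf : AssumptionA f α h) (i j : ℕ) (hij : i ≤ j) :
    hf.cr i * hf.cr (j+1) ≤ hf.cr (i+1) * hf.cr j :=
  le_of_tendsto_of_tendsto' ((hf.coeff_tendsto' i).mul (hf.coeff_tendsto' (j+1)))
    ((hf.coeff_tendsto' (i+1)).mul (hf.coeff_tendsto' j))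
    fun R => prodPoly_logConcave _ (fun y hy => (hf.S_pos R y hy).le) i j hij

lemma AssumptionA.gam_eq (hf : AssumptionA f α h) (n : ℕ) :
    gam f (2 * n) = (-1) ^ n * ((2 * n).factorial * f 0) * (hf.cr n : ℂ) := by
  have h1 := hf.c_real n
  have hf0 : f 0 ≠ 0 := hf.ne_zero
  have hfac : ((2 * n).factorial : ℂ) ≠ 0 := by exact_mod_cast (Nat.factorial_ne_zero _)
  have h5 : ((-1 : ℂ) ^ n) * (-1) ^ n = 1 := by rw [← mul_pow]; simp
  unfold AssumptionA.cr
  rw [← h1]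
  unfold AssumptionA.c
  field_simp
  linear_combination (-gam f (2 * n)) * h5

lemma AssumptionA.t_mono (hf : AssumptionA f α h) :
    Monotone fun n => hf.cr n / hf.cr (n+1) := by
  intro i j hij
  simp only
  rw [div_le_div_iff₀ (hf.cr_pos _) (hf.cr_pos _)]
  have := hf.cr_logConcave i j hij
  linarith

lemma AssumptionA.t_tendsto (hf : AssumptionA f α h) :
    Tendsto (fun n => hf.cr n / hf.cr (n+1)) atTop atTop := by
  refine tendsto_atTop_atTop_of_monotone hf.t_mono fun b => ?_
  by_contra hcon
  push Not at hcon
  set T := max b 1 with hT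
  have hTp : 0 < T := lt_of_lt_of_le one_pos (le_max_right _ _)
  have h1 : ∀ n, hf.cr 0 ≤ hf.cr n * T ^ n := by
    intro n
    induction n with
    | zero => simp
    | succ n ih =>
      have h2 := (hcon n).le.trans (le_max_left b 1)
      rw [div_le_iff₀ (hf.cr_pos _), ← hT] at h2
      calc _ ≤ _ := ih
        _ ≤ T * hf.cr (n+1) * T ^ n := mul_le_mul_of_nonneg_right h2 (by positivity)
        _ = _ := by ring
  obtain ⟨ρ, hρ, C, hC, hb⟩ := hf.order
  set r := Real.sqrt (2 * T) with hr
  have hrp : 0 < r := Real.sqrt_pos.2 (by positivity)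
  have hr2 : r ^ 2 = 2 * T := Real.sq_sqrt (by positivity)
  have hf0 : 0 < ‖f 0‖ := norm_pos_iff.2 hf.ne_zero
  have h3 : ∀ n, 2 ^ n * (‖f 0‖ * hf.cr 0) ≤ C * Real.exp (r ^ ρ) := by
    intro n
    have h4 := Complex.norm_iteratedDeriv_le_of_forall_mem_sphere_norm_le (f := f) (c := 0) (R := r)
      (C := C * Real.exp (r ^ ρ)) (2 * n) hrp hf.entire.diffContOnCl (by
        intro z hz
        rw [mem_sphere_zero_iff_norm] at hz
        have := hb z
        rwa [hz] at this)
    have h5 := hf.gam_eq n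
    unfold gam at h5
    rw [h5] at h4
    have hfac : (0:ℝ) < (2 * n).factorial := by exact_mod_cast (Nat.factorial_pos _)
    rw [norm_mul, norm_mul, norm_pow, norm_neg, norm_one, one_pow, one_mul, norm_mul,
      Complex.norm_natCast, Complex.norm_real, Real.norm_eq_abs, abs_of_pos (hf.cr_pos n),
      pow_mul, hr2, mul_assoc, mul_div_assoc] at h4
    have h6 := le_of_mul_le_mul_left h4 hfac
    rw [le_div_iff₀ (by positivity), mul_pow] at h6
    calc 2 ^ n * (‖f 0‖ * hf.cr 0) ≤ 2 ^ n * (‖f 0‖ * (hf.cr n * T ^ n)) := by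
          gcongr; exact h1 n
      _ = ‖f 0‖ * hf.cr n * (2 ^ n * T ^ n) := by ring
      _ ≤ _ := h6
  have ht := (tendsto_pow_atTop_atTop_of_one_lt (by norm_num : (1:ℝ) < 2)).atTop_mul_const
    (mul_pos hf0 (hf.cr_pos 0))
  obtain ⟨k, hk⟩ := (ht.eventually_gt_atTop (C * Real.exp (r ^ ρ))).exists
  exact absurd (h3 k) (not_le.2 hk)

lemma AssumptionA.cr_main (hf : AssumptionA f α h) (V r₀ : ℝ) (hV : 1 ≤ V)
    (hr : ∀ r ≥ r₀, V ≤ (nPlus f (2 * r) - nPlus f r) / 16) (n : ℕ)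
    (hn : (max r₀ 1) ^ 2 < hf.cr (n+1) / hf.cr (n+2)) :
    hf.cr (n+1) ^ 2 - hf.cr n * hf.cr (n+2) ≤ 6 / Real.sqrt V * hf.cr (n+1) ^ 2 := by
  have c0 := hf.coeff_tendsto' n
  have c1 := hf.coeff_tendsto' (n+1)
  have c2 := hf.coeff_tendsto' (n+2)
  refine le_of_tendsto_of_tendsto ((c1.pow 2).sub (c0.mul c2)) ((c1.pow 2).const_mul _) ?_
  have hp1 := c1.eventually (lt_mem_nhds (hf.cr_pos (n+1)))
  have hp2 := c2.eventually (lt_mem_nhds (hf.cr_pos (n+2)))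
  have ct := c1.div c2 (hf.cr_pos (n+2)).ne'
  have ht := ct.eventually (lt_mem_nhds hn)
  have hcs : Tendsto (fun R => 2 * Real.sqrt ((prodPoly (hf.S R)).coeff (n+1) /
      (prodPoly (hf.S R)).coeff (n+2))) atTop
      (nhds (2 * Real.sqrt (hf.cr (n+1) / hf.cr (n+2)))) :=
    ((Real.continuous_sqrt.tendsto _).comp ct).const_mul 2
  have hb := hcs.eventually (gt_mem_nhds (lt_add_one _))
  filter_upwards [hp1, hp2, ht, hb, eventually_ge_atTop
    (2 * Real.sqrt (hf.cr (n+1) / hf.cr (n+2)) + 1)] with R g1 g2 g3 g4 g5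
  refine prodPoly_main (hf.S R) (fun y hy => (hf.S_pos R y hy).le) n V hV g1 g2 ?_
  refine le_trans ?_ (hf.S_var R _ (div_pos g1 g2) (g4.le.trans g5))
  apply hr
  refine (le_max_left r₀ 1).trans ?_
  apply Real.le_sqrt_of_sq_le
  exact g3.le

lemma AssumptionA.cr_ratio (hf : AssumptionA f α h) :
    Tendsto (fun n => hf.cr n * hf.cr (n+2) / hf.cr (n+1) ^ 2) atTop (nhds 1) := by
  rw [Metric.tendsto_atTop]
  intro ε hε
  have hV0 : Tendsto (fun V => 6 / Real.sqrt V) atTop (nhds 0) :=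
    Real.tendsto_sqrt_atTop.const_div_atTop 6
  obtain ⟨V, hV1, hV2⟩ := ((eventually_ge_atTop 1).and
    (hV0.eventually (gt_mem_nhds hε))).exists
  obtain ⟨r₀, hr₀⟩ := hf.nPlus_diff V
  have ht := ((tendsto_add_atTop_iff_nat 1).2 hf.t_tendsto).eventually_gt_atTop ((max r₀ 1) ^ 2)
  obtain ⟨N, hN⟩ := eventually_atTop.1 ht
  refine ⟨N, fun n hn => ?_⟩
  have h1 := hf.cr_main V r₀ hV1 hr₀ n (hN n hn)
  have h2 := hf.cr_logConcave n (n+1) (by omega)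
  have hp := hf.cr_pos (n+1)
  have hp2 : 0 < hf.cr (n+1) ^ 2 := by positivity
  rw [Real.dist_eq, abs_sub_lt_iff]
  constructor
  · have : hf.cr n * hf.cr (n+2) / hf.cr (n+1) ^ 2 ≤ 1 := by
      rw [div_le_one hp2]; nlinarith
    linarith
  · have : 1 - 6 / Real.sqrt V ≤ hf.cr n * hf.cr (n+2) / hf.cr (n+1) ^ 2 := by
      rw [le_div_iff₀ hp2]; linarith
    linarith

end

section
variable {f : ℂ → ℂ} {α : ℝ} {h : ℝ → ℝ}

/-- `-γ_{2n+2}/γ_{2n}` -/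
noncomputable def AssumptionA.B (hf : AssumptionA f α h) (n : ℕ) : ℝ :=
  hf.cr (n+1) / hf.cr n * ((2 * n + 1) * (2 * n + 2))

lemma AssumptionA.B_pos (hf : AssumptionA f α h) (n : ℕ) : 0 < hf.B n := by
  have := hf.cr_pos (n+1)
  have := hf.cr_pos n
  unfold AssumptionA.B
  positivity

lemma AssumptionA.gam_ne (hf : AssumptionA f α h) (n : ℕ) : gam f (2 * n) ≠ 0 := by
  rw [hf.gam_eq]
  have hf0 : f 0 ≠ 0 := hf.ne_zero
  have hfac : ((2 * n).factorial : ℂ) ≠ 0 := by exact_mod_cast (Nat.factorial_ne_zero _)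
  have : (hf.cr n : ℂ) ≠ 0 := by exact_mod_cast (hf.cr_pos n).ne'
  have h1 : ((-1 : ℂ) ^ n) ≠ 0 := pow_ne_zero _ (by norm_num)
  exact mul_ne_zero (mul_ne_zero h1 (mul_ne_zero hfac hf0)) this

lemma AssumptionA.gam_succ (hf : AssumptionA f α h) (n : ℕ) :
    gam f (2 * (n+1)) = -(hf.B n : ℂ) * gam f (2 * n) := by
  rw [hf.gam_eq, hf.gam_eq]
  have : (hf.cr n : ℂ) ≠ 0 := by exact_mod_cast (hf.cr_pos n).ne'
  have e : (2 * (n+1)).factorial = (2 * n + 2) * ((2 * n + 1) * (2 * n).factorial) := by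
    rw [show 2 * (n+1) = (2 * n + 1) + 1 by ring, Nat.factorial_succ, Nat.factorial_succ]
  rw [e]
  unfold AssumptionA.B
  push_cast
  field_simp
  ring

lemma AssumptionA.gam_add (hf : AssumptionA f α h) (n k : ℕ) :
    gam f (2 * (n+k)) = (-1) ^ k * (∏ j ∈ Finset.range k, (hf.B (n+j) : ℂ)) * gam f (2 * n) := by
  induction k with
  | zero => simp
  | succ k ih =>
    rw [← add_assoc, hf.gam_succ, ih, Finset.prod_range_succ]
    ring

lemma AssumptionA.B_ratio (hf : AssumptionA f α h) :
    Tendsto (fun n => hf.B (n+1) / hf.B n) atTop (nhds 1) := by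
  have h1 : Tendsto (fun n : ℕ => 1 + 2 / (n + 1 : ℝ)) atTop (nhds (1 + 0)) := by
    refine tendsto_const_nhds.add ?_
    have := tendsto_one_div_add_atTop_nhds_zero_nat (𝕜 := ℝ)
    simpa [div_eq_mul_inv] using this.const_mul 2
  have h2 : Tendsto (fun n : ℕ => ((2 * n + 3) * (2 * n + 4) : ℝ) / ((2 * n + 1) * (2 * n + 2)))
      atTop (nhds 1) := by
    have h3 := h1.mul h1
    simp only [add_zero, mul_one] at h3
    refine tendsto_of_tendsto_of_tendsto_of_le_of_le tendsto_const_nhds h3 ?_ ?_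
    · intro n
      simp only
      rw [le_div_iff₀ (by positivity)]
      nlinarith [Nat.cast_nonneg (α := ℝ) n]
    · intro n
      have hn := Nat.cast_nonneg (α := ℝ) n
      simp only
      have e1 : (1 + 2 / (n + 1 : ℝ)) = (n + 3) / (n + 1) := by field_simp; ring
      rw [e1, div_mul_div_comm, div_le_div_iff₀ (by positivity) (by positivity)]
      nlinarith [mul_nonneg hn hn, mul_nonneg hn (mul_nonneg hn hn)]
  have h4 := hf.cr_ratio.mul h2
  simp only [mul_one] at h4
  refine h4.congr fun n => ?_
  have e0 := hf.cr_pos n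
  have e1 := hf.cr_pos (n+1)
  have e2 := hf.cr_pos (n+2)
  unfold AssumptionA.B
  push_cast
  rw [show n + 1 + 1 = n + 2 by ring]
  field_simp
  ring

lemma AssumptionA.aB (hf : AssumptionA f α h) (a : ℕ → ℝ)
    (ha : Tendsto (fun n => a n * hf.B n) atTop (nhds 1)) (j : ℕ) :
    Tendsto (fun n => a n * hf.B (n+j)) atTop (nhds 1) := by
  induction j with
  | zero => simpa using ha
  | succ j ih =>
    have h1 := ih.mul ((tendsto_add_atTop_iff_nat j).2 hf.B_ratio)
    simp only [mul_one] at h1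
    refine h1.congr fun n => ?_
    have := hf.B_pos (n+j)
    rw [← add_assoc]
    field_simp

lemma AssumptionA.B_le (hf : AssumptionA f α h) (N n j : ℕ) (hN : 1 ≤ N) (hn : N ≤ n) :
    hf.B (n+j) ≤ hf.B n * (1 + j / N) ^ 2 := by
  have h1 : hf.cr (n+j+1) / hf.cr (n+j) ≤ hf.cr (n+1) / hf.cr n := by
    rw [div_le_div_iff₀ (hf.cr_pos _) (hf.cr_pos _)]
    have := hf.cr_logConcave n (n+j) (by omega)
    linarith
  have hN' : (1:ℝ) ≤ N := by exact_mod_cast hN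
  have hn' : (N:ℝ) ≤ n := by exact_mod_cast hn
  have hj : (0:ℝ) ≤ j := Nat.cast_nonneg j
  have hp : (0:ℝ) ≤ hf.cr (n+1) / hf.cr n := (div_pos (hf.cr_pos _) (hf.cr_pos _)).le
  have e : (n:ℝ) * (j / N) ≥ j := by
    rw [mul_div_assoc', ge_iff_le, le_div_iff₀ (by linarith)]; nlinarith
  have e0 : (0:ℝ) ≤ j / N := by positivity
  have h2 : (2 * ((n + j : ℕ) : ℝ) + 1) ≤ (2 * n + 1) * (1 + j / N) := by
    push_cast; nlinarith
  have h3 : (2 * ((n + j : ℕ) : ℝ) + 2) ≤ (2 * n + 2) * (1 + j / N) := by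
    push_cast; nlinarith
  unfold AssumptionA.B
  calc _ ≤ hf.cr (n+1) / hf.cr n * (((2 * n + 1) * (1 + j / N)) * ((2 * n + 2) * (1 + j / N))) := by
        gcongr
    _ = _ := by ring

/-- dominating sequence -/
noncomputable def domD (R : ℝ) (N k : ℕ) : ℝ :=
  ∏ j ∈ Finset.range k, (2 * (1 + (j:ℝ) / N) ^ 2 * R ^ 2 / ((2 * j + 1) * (2 * j + 2)))

lemma domD_summable (R : ℝ) (hR : 0 < R) (N : ℕ) (hN : 1 ≤ N) (hNR : 2 * R ≤ N) :
    Summable (domD R N) := by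
  refine summable_of_ratio_norm_eventually_le (r := 1 / 2) (by norm_num) ?_
  filter_upwards [eventually_ge_atTop N] with k hk
  have hN' : (1:ℝ) ≤ N := by exact_mod_cast hN
  have hk' : (N:ℝ) ≤ k := by exact_mod_cast hk
  have : domD R N (k+1) = domD R N k *
      (2 * (1 + (k:ℝ) / N) ^ 2 * R ^ 2 / ((2 * k + 1) * (2 * k + 2))) := by
    unfold domD; rw [Finset.prod_range_succ]
  rw [this, norm_mul, mul_comm]
  refine mul_le_mul_of_nonneg_right ?_ (norm_nonneg _)
  rw [Real.norm_eq_abs, abs_of_nonneg (by positivity), div_le_iff₀ (by positivity)]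
  have h1 : (1 + (k:ℝ) / N) * R ≤ k := by
    have e : (1 + (k:ℝ) / N) ≤ 2 * k / N := by
      rw [le_div_iff₀ (by linarith), add_mul, div_mul_cancel₀ _ (by linarith)]; linarith
    calc (1 + (k:ℝ) / N) * R ≤ 2 * k / N * R := by gcongr
      _ = k * (2 * R / N) := by ring
      _ ≤ k * 1 := by
        gcongr
        rw [div_le_one (by linarith)]; exact hNR
      _ = k := by ring
  have h2 : ((1 + (k:ℝ) / N) * R) ^ 2 ≤ (k:ℝ) ^ 2 := pow_le_pow_left₀ (by positivity) h1 2
  nlinarith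

lemma fact_two_mul_succ (k : ℕ) : ((2 * (k+1)).factorial : ℝ) =
    (2 * k).factorial * ((2 * k + 1) * (2 * k + 2)) := by
  rw [show 2 * (k+1) = (2 * k + 1) + 1 by ring, Nat.factorial_succ, Nat.factorial_succ]
  push_cast; ring

lemma AssumptionA.dom (hf : AssumptionA f α h) (N n : ℕ) (hN : 1 ≤ N) (hn : N ≤ n) (R a : ℝ)
    (ha : 0 < a) (haB : a * hf.B n ≤ 2) (k : ℕ) :
    (∏ j ∈ Finset.range k, (a * hf.B (n+j))) * R ^ (2 * k) / (2 * k).factorial ≤ domD R N k := by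
  have : (∏ j ∈ Finset.range k, (a * hf.B (n+j))) * R ^ (2 * k) / (2 * k).factorial =
      ∏ j ∈ Finset.range k, ((a * hf.B (n+j)) * R ^ 2 / ((2 * j + 1) * (2 * j + 2))) := by
    induction k with
    | zero => simp
    | succ k ih =>
      rw [Finset.prod_range_succ _ k, Finset.prod_range_succ _ k, ← ih, fact_two_mul_succ]
      have : ((2 * k).factorial : ℝ) ≠ 0 := by exact_mod_cast (Nat.factorial_ne_zero _)
      field_simp
      ring
  rw [this]
  unfold domD
  refine Finset.prod_le_prod (fun j _ => ?_) (fun j _ => ?_)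
  · have := hf.B_pos (n+j)
    positivity
  · have h1 := hf.B_le N n j hN hn
    have h2 : a * hf.B (n+j) ≤ 2 * (1 + (j:ℝ) / N) ^ 2 := by
      calc a * hf.B (n+j) ≤ a * (hf.B n * (1 + j / N) ^ 2) := by gcongr
        _ = (a * hf.B n) * (1 + j / N) ^ 2 := by ring
        _ ≤ _ := by gcongr
    gcongr

lemma AssumptionA.taylor (hf : AssumptionA f α h) (n : ℕ) (w : ℂ) :
    HasSum (fun k : ℕ => gam f (2 * (n + k)) * w ^ (2 * k) / (2 * k).factorial)
      (iteratedDeriv (2 * n) f w) := by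
  have hd : Differentiable ℂ (iteratedDeriv (2 * n) f) :=
    (hf.entire.contDiff (n := ⊤)).differentiable_iteratedDeriv _ (by exact_mod_cast WithTop.coe_lt_top _)
  have h1 := Complex.hasSum_taylorSeries_of_entire hd 0 w
  have hadd : ∀ m, iteratedDeriv m (iteratedDeriv (2 * n) f) 0 = iteratedDeriv (m + 2 * n) f 0 := by
    intro m
    simp only [iteratedDeriv_eq_iterate, Function.iterate_add_apply]
  have hodd : ∀ m, Odd m → iteratedDeriv m f 0 = 0 := by
    intro m hm
    have h2 := iteratedDeriv_comp_neg m f 0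
    rw [show (fun x => f (-x)) = f from funext hf.even, hm.neg_one_pow] at h2
    simp only [neg_zero, neg_smul, one_smul] at h2
    exact self_eq_neg.1 h2
  have hinj : Function.Injective (fun k : ℕ => 2 * k) := fun a b hab => by simpa using hab
  rw [← hinj.hasSum_iff] at h1
  · refine (congrArg (fun g => HasSum g (iteratedDeriv (2 * n) f w)) (funext fun k => ?_)).mp h1
    simp only [Function.comp_apply, hadd, sub_zero, smul_eq_mul, gam]
    rw [show 2 * k + 2 * n = 2 * (n + k) by ring]
    ring
  · intro m hm
    have : Odd m := by
      rw [← Nat.not_even_iff_odd]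
      rintro ⟨k, hk⟩
      exact hm ⟨k, by simp only; omega⟩
    rw [hadd, hodd _ (this.add_even (even_two_mul n))]
    simp

lemma AssumptionA.final (hf : AssumptionA f α h) (a : ℕ → ℝ) (hapos : ∀ᶠ n in atTop, 0 < a n)
    (ha : Tendsto (fun n => a n * hf.B n) atTop (nhds 1)) (R : ℝ) (hR : 0 < R) :
    Tendsto (fun n => ∑' k : ℕ, |(∏ j ∈ Finset.range k, (a n * hf.B (n+j))) - 1| *
      (R ^ (2 * k) / (2 * k).factorial)) atTop (nhds 0) := by
  obtain ⟨N, hN⟩ := exists_nat_ge (2 * R + 1)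
  have hN1 : 1 ≤ N := by
    have : (1:ℝ) ≤ N := by linarith
    exact_mod_cast this
  have hcosh : Summable (fun k : ℕ => R ^ (2 * k) / (2 * k).factorial) :=
    (Real.hasSum_cosh R).summable
  have := tendsto_tsum_of_dominated_convergence (𝓕 := atTop)
    (f := fun (n : ℕ) (k : ℕ) => |(∏ j ∈ Finset.range k, (a n * hf.B (n+j))) - 1| *
      (R ^ (2 * k) / (2 * k).factorial)) (g := fun _ => (0:ℝ))
    (bound := fun k => domD R N k + R ^ (2 * k) / (2 * k).factorial)
    ((domD_summable R hR N hN1 (by linarith)).add hcosh) ?_ ?_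
  · simpa using this
  · intro k
    have h1 : Tendsto (fun n => ∏ j ∈ Finset.range k, (a n * hf.B (n+j))) atTop
        (nhds (∏ j ∈ Finset.range k, (1:ℝ))) := tendsto_finsetProd _ fun j _ => hf.aB a ha j
    have h2 := ((h1.sub_const 1).abs).mul_const (R ^ (2 * k) / ((2 * k).factorial : ℝ))
    simpa using h2
  · filter_upwards [eventually_ge_atTop N, hapos,
      ha.eventually (ge_mem_nhds (by norm_num : (1:ℝ) < 2))] with n hn hp hB k
    have h1 := hf.dom N n hN1 hn R (a n) hp hB k
    have h2 : 0 ≤ ∏ j ∈ Finset.range k, (a n * hf.B (n+j)) :=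
      Finset.prod_nonneg fun j _ => (mul_pos hp (hf.B_pos _)).le
    have h3 : 0 ≤ R ^ (2 * k) / ((2 * k).factorial : ℝ) := by positivity
    rw [Real.norm_eq_abs, abs_of_nonneg (mul_nonneg (abs_nonneg _) h3)]
    have h4 : |(∏ j ∈ Finset.range k, (a n * hf.B (n+j))) - 1| ≤
        (∏ j ∈ Finset.range k, (a n * hf.B (n+j))) + 1 := by
      rw [abs_le]; constructor <;> linarith
    calc _ ≤ ((∏ j ∈ Finset.range k, (a n * hf.B (n+j))) + 1) *
          (R ^ (2 * k) / ((2 * k).factorial : ℝ)) := mul_le_mul_of_nonneg_right h4 h3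
      _ = (∏ j ∈ Finset.range k, (a n * hf.B (n+j))) * R ^ (2 * k) / (2 * k).factorial +
          R ^ (2 * k) / ((2 * k).factorial : ℝ) := by ring
      _ ≤ _ := by linarith

lemma AssumptionA.final_summable (hf : AssumptionA f α h) (a : ℕ → ℝ)
    (hapos : ∀ᶠ n in atTop, 0 < a n)
    (ha : Tendsto (fun n => a n * hf.B n) atTop (nhds 1)) (R : ℝ) (hR : 0 < R) :
    ∀ᶠ n in atTop, Summable (fun k : ℕ => |(∏ j ∈ Finset.range k, (a n * hf.B (n+j))) - 1| *
      (R ^ (2 * k) / (2 * k).factorial)) := by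
  obtain ⟨N, hN⟩ := exists_nat_ge (2 * R + 1)
  have hN1 : 1 ≤ N := by
    have : (1:ℝ) ≤ N := by linarith
    exact_mod_cast this
  have hcosh : Summable (fun k : ℕ => R ^ (2 * k) / (2 * k).factorial) :=
    (Real.hasSum_cosh R).summable
  filter_upwards [eventually_ge_atTop N, hapos,
      ha.eventually (ge_mem_nhds (by norm_num : (1:ℝ) < 2))] with n hn hp hB
  refine Summable.of_nonneg_of_le (fun k => by positivity) (fun k => ?_)
    ((domD_summable R hR N hN1 (by linarith)).add hcosh)
  have h1 := hf.dom N n hN1 hn R (a n) hp hB k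
  have h2 : 0 ≤ ∏ j ∈ Finset.range k, (a n * hf.B (n+j)) :=
    Finset.prod_nonneg fun j _ => (mul_pos hp (hf.B_pos _)).le
  have h3 : 0 ≤ R ^ (2 * k) / ((2 * k).factorial : ℝ) := by positivity
  have h4 : |(∏ j ∈ Finset.range k, (a n * hf.B (n+j))) - 1| ≤
      (∏ j ∈ Finset.range k, (a n * hf.B (n+j))) + 1 := by
    rw [abs_le]; constructor <;> linarith
  calc _ ≤ ((∏ j ∈ Finset.range k, (a n * hf.B (n+j))) + 1) *
        (R ^ (2 * k) / ((2 * k).factorial : ℝ)) := mul_le_mul_of_nonneg_right h4 h3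
    _ = (∏ j ∈ Finset.range k, (a n * hf.B (n+j))) * R ^ (2 * k) / (2 * k).factorial +
        R ^ (2 * k) / ((2 * k).factorial : ℝ) := by ring
    _ ≤ _ := by linarith

lemma AssumptionA.diff_bound (hf : AssumptionA f α h) (n : ℕ) (a : ℝ) (hp : 0 < a) (R : ℝ)
    (hS : Summable (fun k : ℕ => |(∏ j ∈ Finset.range k, (a * hf.B (n+j))) - 1| *
      (R ^ (2 * k) / (2 * k).factorial))) (z : ℂ) (hz : ‖z‖ ≤ R) :
    ‖(1 / gam f (2 * n)) * iteratedDeriv (2 * n) f (((Real.sqrt a : ℝ) : ℂ) * z) - Complex.cos z‖ ≤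
      ∑' k : ℕ, |(∏ j ∈ Finset.range k, (a * hf.B (n+j))) - 1| *
      (R ^ (2 * k) / (2 * k).factorial) := by
  have h1 := (hf.taylor n (((Real.sqrt a : ℝ) : ℂ) * z)).mul_left (1 / gam f (2 * n))
  have h2 := h1.sub (Complex.hasSum_cos z)
  rw [← h2.tsum_eq]
  refine tsum_of_norm_bounded hS.hasSum fun k => ?_
  have e : 1 / gam f (2 * n) * (gam f (2 * (n + k)) * (((Real.sqrt a : ℝ) : ℂ) * z) ^ (2 * k) /
      (2 * k).factorial) - (-1) ^ k * z ^ (2 * k) / (2 * k).factorial =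
      (-1) ^ k * ((((∏ j ∈ Finset.range k, (a * hf.B (n+j))) - 1 : ℝ) : ℂ)) *
        (z ^ (2 * k) / (2 * k).factorial) := by
    have hs : ((Real.sqrt a : ℝ) : ℂ) ^ (2 * k) = (a : ℂ) ^ k := by
      rw [pow_mul]; congr 1; exact_mod_cast Real.sq_sqrt hp.le
    have hg := hf.gam_ne n
    rw [hf.gam_add, mul_pow, hs, Finset.prod_mul_distrib]
    simp only [Finset.prod_const, Finset.card_range]
    push_cast
    field_simp
  rw [e, norm_mul, norm_mul, norm_pow, norm_neg, norm_one, one_pow, one_mul, norm_div, norm_pow,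
    Complex.norm_natCast, Complex.norm_real, Real.norm_eq_abs]
  gcongr
end

/-- Cosine universality for even entire functions. -/
theorem stmt0 (f : ℂ → ℂ) (α : ℝ) (h : ℝ → ℝ) (hf : AssumptionA f α h)
    (a : ℕ → ℝ) (hapos : ∀ᶠ n in atTop, 0 < a n)
    (ha : Tendsto (fun n : ℕ => -(a n : ℂ) * gam f (2 * (n + 1)) / gam f (2 * n))
      atTop (nhds 1)) :
    TendstoLocallyUniformly
      (fun (n : ℕ) (z : ℂ) =>
        (1 / gam f (2 * n)) * iteratedDeriv (2 * n) f (((Real.sqrt (a n) : ℝ) : ℂ) * z))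
      (fun z => Complex.cos z) atTop := by
  have ha' : Tendsto (fun n => a n * hf.B n) atTop (nhds 1) := by
    have h1 := (Complex.continuous_re.tendsto _).comp ha
    simp only [Complex.one_re] at h1
    refine h1.congr fun n => ?_
    have hg := hf.gam_ne n
    have : -(a n : ℂ) * gam f (2 * (n + 1)) / gam f (2 * n) = ((a n * hf.B n : ℝ) : ℂ) := by
      rw [hf.gam_succ]
      push_cast
      field_simp
    simp only [Function.comp_apply]
    rw [this, Complex.ofReal_re]
  rw [Metric.tendstoLocallyUniformly_iff]
  intro ε hε x
  refine ⟨Metric.ball 0 (‖x‖ + 1), Metric.isOpen_ball.mem_nhds (by simp), ?_⟩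
  have hR : 0 < ‖x‖ + 1 := by positivity
  filter_upwards [hapos, (hf.final a hapos ha' (‖x‖ + 1) hR).eventually (gt_mem_nhds hε),
    hf.final_summable a hapos ha' (‖x‖ + 1) hR] with n hp hlt hs z hz
  rw [dist_comm, dist_eq_norm]
  exact (hf.diff_bound n (a n) hp _ hs z (mem_ball_zero_iff.1 hz).le).trans_lt hlt
end

section
/- For each m ∈ ℕ let P_m be a monic polynomial of degree m with only real roots, and assume m_1(P_m) → a ∈ ℝ and m_2(P_m) = o(m) as m → ∞. Then for every d ∈ ℕ, (1/(n+d)_n) · (d/dz)^n P_{d+n}(z) → (z − a)^d as n → ∞, uniformly on compact subsets of the complex plane. -/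
open Filter Polynomial

/-- `j`-th moment of the empirical root measure of `p`. -/
noncomputable def mom (p : Polynomial ℂ) (j : ℕ) : ℂ :=
  (p.roots.map (fun z => z ^ j)).sum / (p.natDegree : ℂ)

/-- `n`-th derivative of a polynomial. -/
noncomputable def dern (n : ℕ) (p : Polynomial ℂ) : Polynomial ℂ :=
  (fun q => Polynomial.derivative q)^[n] p

theorem newton_ms (s : Multiset ℂ) (k : ℕ) :
    (k : ℂ) * s.esymm k = (-1) ^ (k + 1) *
      ∑ b ∈ Finset.HasAntidiagonal.antidiagonal k with b.1 < k,
        (-1) ^ b.1 * s.esymm b.1 * (s.map (fun z => z ^ b.2)).sum := by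
  classical
  have h := congrArg (MvPolynomial.aeval (fun x : s => (x : ℂ)))
    (MvPolynomial.mul_esymm_eq_sum s ℂ k)
  simp only [map_mul, map_sum, map_pow, map_neg, map_one, map_natCast,
    MvPolynomial.aeval_esymm_eq_multiset_esymm, MvPolynomial.psum, MvPolynomial.aeval_X,
    Multiset.map_univ_coe] at h
  rw [h]
  congr 1
  refine Finset.sum_congr rfl fun b _ => ?_
  congr 1
  rw [← Multiset.map_univ s (fun z => z ^ b.2)]
  rfl

theorem psum_bound (s : Multiset ℂ) (hs : ∀ z ∈ s, z.im = 0) (j : ℕ) :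
    ‖(s.map (fun z => z ^ (j + 2))).sum‖
      ≤ Real.sqrt ‖(s.map (fun z => z ^ 2)).sum‖ ^ (j + 2) := by
  set T : ℝ := (s.map (fun z => ‖z‖ ^ 2)).sum with hT
  have hTnn : 0 ≤ T := by
    apply Multiset.sum_nonneg
    intro x hx
    obtain ⟨z, _, rfl⟩ := Multiset.mem_map.1 hx
    positivity
  have hS : (s.map (fun z => z ^ 2)).sum = (T : ℂ) := by
    rw [hT, ← Complex.ofRealHom_eq_coe, map_multiset_sum, Multiset.map_map]
    congr 1
    refine Multiset.map_congr rfl fun z hz => ?_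
    have h0 := hs z hz
    have : z = (z.re : ℂ) := Complex.ext (by simp) (by simp [h0])
    simp only [Function.comp, Complex.ofRealHom_eq_coe]
    rw [this, Complex.norm_real, Real.norm_eq_abs, sq_abs]
    push_cast
    simp
  rw [hS, Complex.norm_real, Real.norm_of_nonneg hTnn]
  set R := Real.sqrt T with hR
  have hR2 : R ^ 2 = T := Real.sq_sqrt hTnn
  have hle : ∀ z ∈ s, ‖z‖ ≤ R := by
    intro z hz
    apply Real.le_sqrt_of_sq_le
    refine Multiset.single_le_sum ?_ _ (Multiset.mem_map_of_mem (fun z => ‖z‖ ^ 2) hz)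
    intro x hx
    obtain ⟨z, _, rfl⟩ := Multiset.mem_map.1 hx
    positivity
  calc ‖(s.map (fun z => z ^ (j + 2))).sum‖
      ≤ ((s.map (fun z => z ^ (j + 2))).map (fun z => ‖z‖)).sum := norm_multiset_sum_le _
    _ = (s.map (fun z => ‖z‖ ^ (j + 2))).sum := by
        rw [Multiset.map_map]; simp [Function.comp_def]
    _ ≤ (s.map (fun z => R ^ j * ‖z‖ ^ 2)).sum := by
        apply Multiset.sum_map_le_sum_map
        intro z hz
        rw [pow_add]
        have := hle z hz
        gcongr
    _ = R ^ (j + 2) := by rw [Multiset.sum_map_mul_left, ← hT, ← hR2, pow_add]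

theorem esymm_lim (e p : ℕ → ℕ → ℂ) (a : ℂ) (he0 : ∀ m, e m 0 = 1)
    (hN : ∀ m k : ℕ, (k : ℂ) * e m k = (-1) ^ (k + 1) *
      ∑ b ∈ Finset.HasAntidiagonal.antidiagonal k with b.1 < k, (-1) ^ b.1 * e m b.1 * p m b.2)
    (hp1 : Tendsto (fun m : ℕ => p m 1 / (m : ℂ) ^ 1) atTop (nhds a))
    (hp2 : ∀ j, Tendsto (fun m : ℕ => p m (j + 2) / (m : ℂ) ^ (j + 2)) atTop (nhds 0))
    (k : ℕ) : Tendsto (fun m : ℕ => e m k / (m : ℂ) ^ k) atTop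
      (nhds (a ^ k / (k.factorial : ℂ))) := by
  induction k using Nat.strong_induction_on with
  | _ k ih =>
  rcases k with _ | k
  · simp [he0]
  have key : ∀ m, e m (k + 1) / (m : ℂ) ^ (k + 1) = ((k + 1 : ℕ) : ℂ)⁻¹ * ((-1) ^ (k + 2) *
      ∑ b ∈ Finset.HasAntidiagonal.antidiagonal (k + 1) with b.1 < k + 1,
        (-1) ^ b.1 * (e m b.1 / (m : ℂ) ^ b.1) * (p m b.2 / (m : ℂ) ^ b.2)) := by
    intro m
    have hk : ((k + 1 : ℕ) : ℂ) ≠ 0 := Nat.cast_ne_zero.2 (by omega)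
    rw [eq_inv_mul_iff_mul_eq₀ hk, ← mul_div_assoc, hN m (k + 1), mul_div_assoc, Finset.sum_div]
    congr 1
    refine Finset.sum_congr rfl fun b hb => ?_
    have hb' := Finset.HasAntidiagonal.mem_antidiagonal.1 (Finset.mem_filter.1 hb).1
    rw [← hb', pow_add (m : ℂ)]
    rw [← mul_div_assoc ((-1 : ℂ) ^ b.1), div_mul_div_comm]
  simp_rw [key]
  have hlim : Tendsto (fun m : ℕ => ∑ b ∈ Finset.HasAntidiagonal.antidiagonal (k + 1) with b.1 < k + 1,
        (-1) ^ b.1 * (e m b.1 / (m : ℂ) ^ b.1) * (p m b.2 / (m : ℂ) ^ b.2)) atTop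
      (nhds (∑ b ∈ Finset.HasAntidiagonal.antidiagonal (k + 1) with b.1 < k + 1,
        (-1) ^ b.1 * (a ^ b.1 / (b.1.factorial : ℂ)) * (if b.2 = 1 then a else 0))) := by
    refine tendsto_finsetSum _ fun b hb => ?_
    obtain ⟨hb1, hb2⟩ := Finset.mem_filter.1 hb
    have hb' := Finset.HasAntidiagonal.mem_antidiagonal.1 hb1
    refine ((ih b.1 hb2).const_mul _).mul ?_
    rcases hq : b.2 with _ | _ | q
    · omega
    · simpa using hp1
    · simpa using hp2 q
  have hval : (∑ b ∈ Finset.HasAntidiagonal.antidiagonal (k + 1) with b.1 < k + 1,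
        (-1 : ℂ) ^ b.1 * (a ^ b.1 / (b.1.factorial : ℂ)) * (if b.2 = 1 then a else 0))
      = (-1) ^ k * (a ^ k / (k.factorial : ℂ)) * a := by
    rw [Finset.sum_eq_single (k, 1)]
    · simp
    · intro b hb hne
      have hb' := Finset.HasAntidiagonal.mem_antidiagonal.1 (Finset.mem_filter.1 hb).1
      have : b.2 ≠ 1 := fun h => hne (Prod.ext (by simp; omega) h)
      simp [this]
    · intro h
      exact absurd h (by simp)
  rw [hval] at hlim
  have := (hlim.const_mul ((-1) ^ (k + 2))).const_mul (((k + 1 : ℕ) : ℂ)⁻¹)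
  convert this using 2
  have h1 : ((-1 : ℂ) ^ k) * (-1) ^ k = 1 := by rw [← mul_pow]; simp
  rw [Nat.factorial_succ, Nat.cast_mul, pow_add (-1 : ℂ), pow_succ a]
  have hk : ((k + 1 : ℕ) : ℂ) ≠ 0 := Nat.cast_ne_zero.2 (by omega)
  have hf : (k.factorial : ℂ) ≠ 0 := Nat.cast_ne_zero.2 (Nat.factorial_ne_zero k)
  field_simp
  linear_combination (-a ^ k * a) * h1

theorem poly_lu (d : ℕ) (c : ℕ → ℕ → ℂ) (c' : ℕ → ℂ)
    (h : ∀ k ∈ Finset.range (d + 1), Tendsto (fun n => c n k) atTop (nhds (c' k))) :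
    TendstoLocallyUniformly (fun (n : ℕ) (z : ℂ) => ∑ k ∈ Finset.range (d + 1), c n k * z ^ k)
      (fun z => ∑ k ∈ Finset.range (d + 1), c' k * z ^ k) atTop := by
  rw [Metric.tendstoLocallyUniformly_iff]
  intro ε hε x
  refine ⟨Metric.ball x 1, Metric.ball_mem_nhds x one_pos, ?_⟩
  have hl : Tendsto (fun n => ∑ k ∈ Finset.range (d + 1), ‖c' k - c n k‖ * (‖x‖ + 1) ^ k) atTop
      (nhds 0) := by
    have : (0 : ℝ) = ∑ k ∈ Finset.range (d + 1), ‖c' k - c' k‖ * (‖x‖ + 1) ^ k := by simp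
    rw [this]
    exact tendsto_finsetSum _ fun k hk => ((tendsto_const_nhds.sub (h k hk)).norm).mul_const _
  filter_upwards [hl.eventually_lt_const hε] with n hn y hy
  refine lt_of_le_of_lt ?_ hn
  rw [dist_eq_norm, ← Finset.sum_sub_distrib]
  refine (norm_sum_le _ _).trans (Finset.sum_le_sum fun k _ => ?_)
  rw [← sub_mul, norm_mul, norm_pow]
  have : ‖y‖ ≤ ‖x‖ + 1 := by
    have h1 := norm_le_norm_add_norm_sub' y x
    rw [Metric.mem_ball, dist_eq_norm] at hy
    linarith
  gcongr

theorem fact_lim (k j : ℕ) : Tendsto (fun n : ℕ => (((k + n).descFactorial n : ℕ) : ℂ)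
      / (((n + (k + j)).descFactorial n : ℕ) : ℂ) * ((k + j + n : ℕ) : ℂ) ^ j) atTop
    (nhds (((k + j).factorial : ℂ) / (k.factorial : ℂ))) := by
  have hE := isEquivalent_descFactorial j
  have hne : ∀ᶠ n : ℕ in atTop, (n.descFactorial j : ℝ) ≠ 0 := by
    filter_upwards [eventually_ge_atTop j] with n hn
    exact Nat.cast_ne_zero.2 (by simpa [Nat.descFactorial_eq_zero_iff_lt] using hn)
  have h1 : Tendsto (fun n : ℕ => (n ^ j : ℝ) / (n.descFactorial j : ℝ)) atTop (nhds 1) :=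
    (Asymptotics.isEquivalent_iff_tendsto_one hne).1 hE.symm
  have h2 : Tendsto (fun n : ℕ => ((n : ℂ) ^ j) / (n.descFactorial j : ℂ)) atTop (nhds 1) := by
    have := (Complex.continuous_ofReal.tendsto 1).comp h1
    simpa [Function.comp_def] using this
  have h3 := (h2.comp (tendsto_add_atTop_nat (k + j))).const_mul
    (((k + j).factorial : ℂ) / (k.factorial : ℂ))
  rw [mul_one] at h3
  refine h3.congr fun n => ?_
  simp only [Function.comp]
  have e1 := Nat.factorial_mul_descFactorial (show n ≤ k + n by omega)
  have e2 := Nat.factorial_mul_descFactorial (show n ≤ n + (k + j) by omega)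
  have e3 := Nat.factorial_mul_descFactorial (show j ≤ n + (k + j) by omega)
  rw [show k + n - n = k by omega] at e1
  rw [show n + (k + j) - n = k + j by omega] at e2
  rw [show n + (k + j) - j = k + n by omega, ← e1, ← e2] at e3
  have e4 : ((k.factorial : ℂ) * ((k + n).descFactorial n : ℂ)) *
      ((n + (k + j)).descFactorial j : ℂ)
      = ((k + j).factorial : ℂ) * ((n + (k + j)).descFactorial n : ℂ) := by exact_mod_cast e3
  have n1 : (k.factorial : ℂ) ≠ 0 := Nat.cast_ne_zero.2 (Nat.factorial_ne_zero k)
  have n2 : ((n + (k + j)).descFactorial j : ℂ) ≠ 0 :=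
    Nat.cast_ne_zero.2 (by rw [Ne, Nat.descFactorial_eq_zero_iff_lt]; omega)
  have n3 : ((n + (k + j)).descFactorial n : ℂ) ≠ 0 :=
    Nat.cast_ne_zero.2 (by rw [Ne, Nat.descFactorial_eq_zero_iff_lt]; omega)
  rw [show k + j + n = n + (k + j) by omega]
  rw [div_mul_div_comm, div_mul_eq_mul_div, div_eq_div_iff (mul_ne_zero n1 n2) n3]
  linear_combination (-((n + (k + j) : ℕ) : ℂ) ^ j) * e4

/-- Law of large numbers for repeated differentiation. -/
theorem stmt3 (P : ℕ → Polynomial ℂ) (a : ℝ)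
    (hmonic : ∀ m, (P m).Monic) (hdeg : ∀ m, (P m).natDegree = m)
    (hreal : ∀ m, ∀ z ∈ (P m).roots, z.im = 0)
    (h1 : Tendsto (fun m => mom (P m) 1) atTop (nhds (a : ℂ)))
    (h2 : Asymptotics.IsLittleO atTop (fun m => mom (P m) 2) (fun m : ℕ => (m : ℂ)))
    (d : ℕ) :
    TendstoLocallyUniformly
      (fun (n : ℕ) (z : ℂ) =>
        (1 / ((n + d).descFactorial n : ℂ)) * (dern n (P (d + n))).eval z)
      (fun z => (z - (a : ℂ)) ^ d) atTop := by
  have hcard : ∀ m, Multiset.card (P m).roots = (P m).natDegree := fun m =>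
    splits_iff_card_roots.mp (IsAlgClosed.splits (P m))
  have hp1 : Tendsto (fun m : ℕ => ((P m).roots.map (fun z => z ^ 1)).sum / (m : ℂ) ^ 1) atTop
      (nhds (a : ℂ)) := by
    refine h1.congr fun m => ?_
    rw [mom, hdeg m, pow_one (m : ℂ)]
  have hr : Tendsto (fun m : ℕ => Real.sqrt ‖((P m).roots.map (fun z => z ^ 2)).sum‖ / (m : ℝ))
      atTop (nhds 0) := by
    have h3 := (Real.continuous_sqrt.tendsto _).comp h2.tendsto_div_nhds_zero.norm
    rw [norm_zero, Real.sqrt_zero] at h3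
    refine h3.congr fun m => ?_
    simp only [Function.comp, mom, hdeg m]
    rw [div_div, norm_div, norm_mul, Complex.norm_natCast, Real.sqrt_div (norm_nonneg _),
      Real.sqrt_mul_self (Nat.cast_nonneg m)]
  have hp2 : ∀ j, Tendsto (fun m : ℕ => ((P m).roots.map (fun z => z ^ (j + 2))).sum
      / (m : ℂ) ^ (j + 2)) atTop (nhds 0) := by
    intro j
    have h3 := hr.pow (j + 2)
    rw [zero_pow (by omega)] at h3
    refine squeeze_zero_norm (fun m => ?_) h3
    rw [norm_div, norm_pow, Complex.norm_natCast, div_pow]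
    have := psum_bound (P m).roots (hreal m) j
    gcongr
  have hes := esymm_lim (fun m k => (P m).roots.esymm k)
    (fun m k => ((P m).roots.map (fun z => z ^ k)).sum) a
    (fun m => by simp [Multiset.esymm]) (fun m k => newton_ms _ k) hp1 hp2
  have hfun : (fun (n : ℕ) (z : ℂ) =>
        (1 / ((n + d).descFactorial n : ℂ)) * (dern n (P (d + n))).eval z)
      = fun (n : ℕ) (z : ℂ) => ∑ k ∈ Finset.range (d + 1),
        ((1 / ((n + d).descFactorial n : ℂ)) * (dern n (P (d + n))).coeff k) * z ^ k := by
    funext n z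
    have hlt : (dern n (P (d + n))).natDegree < d + 1 := by
      have := natDegree_iterate_derivative (P (d + n)) n
      rw [hdeg] at this
      change (derivative^[n] (P (d + n))).natDegree < d + 1
      omega
    rw [eval_eq_sum_range' hlt, Finset.mul_sum]
    exact Finset.sum_congr rfl fun k _ => by ring
  have hgoal : (fun z : ℂ => (z - (a : ℂ)) ^ d) = fun z => ∑ k ∈ Finset.range (d + 1),
      ((-(a : ℂ)) ^ (d - k) * (d.choose k : ℂ)) * z ^ k := by
    funext z
    rw [sub_eq_add_neg, add_pow]
    exact Finset.sum_congr rfl fun k _ => by ring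
  rw [hfun, hgoal]
  refine poly_lu d (fun n k => (1 / ((n + d).descFactorial n : ℂ)) *
    (dern n (P (d + n))).coeff k) _ fun k hk => ?_
  obtain ⟨j, rfl⟩ := Nat.exists_eq_add_of_le (Nat.lt_succ_iff.1 (Finset.mem_range.1 hk))
  have hs : Tendsto (fun n : ℕ => k + j + n) atTop atTop := by
    simpa [add_comm] using tendsto_add_atTop_nat (k + j)
  have hm := ((fact_lim k j).mul ((hes j).comp hs)).const_mul ((-1 : ℂ) ^ j)
  have hval : (-1 : ℂ) ^ j * (((k + j).factorial : ℂ) / (k.factorial : ℂ) *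
      ((a : ℂ) ^ j / (j.factorial : ℂ)))
      = (-(a : ℂ)) ^ (k + j - k) * ((k + j).choose k : ℂ) := by
    rw [show k + j - k = j by omega, Nat.cast_add_choose ℂ, neg_pow (a : ℂ)]
    ring
  rw [hval] at hm
  refine hm.congr' ?_
  filter_upwards [eventually_gt_atTop 0] with n hn
  have hc : (dern n (P (k + j + n))).coeff k
      = ((k + n).descFactorial n : ℂ) * ((-1) ^ j * (P (k + j + n)).roots.esymm j) := by
    change (derivative^[n] (P (k + j + n))).coeff k = _
    rw [coeff_iterate_derivative, nsmul_eq_mul, coeff_eq_esymm_roots_of_card (hcard _)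
      (by rw [hdeg]; omega), hdeg, (hmonic _).leadingCoeff, one_mul,
      show k + j + n - (k + n) = j by omega]
  rw [hc]
  simp only [Function.comp]
  have hz : ((k + j + n : ℕ) : ℂ) ^ j ≠ 0 := pow_ne_zero _ (Nat.cast_ne_zero.2 (by omega))
  field_simp
end

section
/- For m ≥ 2 let P_m(z) := z^m − (m²/4)·z^{m−2}; these are monic real-rooted polynomials of degree m whose roots are 0 with multiplicity m−2 and ±m/2, so that m_1(P_m) = 0 and m_2(P_m) = m/2. For every fixed d ≥ 2, (1/(n+d)_n) · (d/dz)^n P_{d+n}(z) → z^d − (d(d−1)/4)·z^{d−2} as n → ∞, uniformly on compact subsets of the complex plane. In particular the limit differs from z^d = (z − 0)^d, so the hypothesis m_2(P_m) = o(m) in the law of large numbers for repeated differentiation cannot be dropped. -/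
open Filter Polynomial

/-- The counterexample polynomials `P_m(z) = z^m - (m²/4) z^(m-2)`. -/
noncomputable def Pcex (m : ℕ) : Polynomial ℂ :=
  Polynomial.X ^ m - Polynomial.C ((m : ℂ) ^ 2 / 4) * Polynomial.X ^ (m - 2)

theorem Pcex_factor (k : ℕ) : Pcex (k + 2) =
    X ^ k * ((X - C (((k : ℂ) + 2) / 2)) * (X - C (-(((k : ℂ) + 2) / 2)))) := by
  have h : (C ((((k + 2 : ℕ) : ℂ)) ^ 2 / 4) : Polynomial ℂ)
      = C (((k : ℂ) + 2) / 2) * C (((k : ℂ) + 2) / 2) := by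
    rw [← C_mul]; congr 1; push_cast; ring
  unfold Pcex
  rw [h, C_neg, Nat.add_sub_cancel]
  ring

theorem Pcex_monic (k : ℕ) : (Pcex (k + 2)).Monic := by
  rw [Pcex_factor]
  exact (monic_X_pow k).mul ((monic_X_sub_C _).mul (monic_X_sub_C _))

theorem Pcex_natDegree (k : ℕ) : (Pcex (k + 2)).natDegree = k + 2 := by
  rw [Pcex_factor, (monic_X_pow k).natDegree_mul ((monic_X_sub_C _).mul (monic_X_sub_C _)),
    (monic_X_sub_C _).natDegree_mul (monic_X_sub_C _)]
  simp only [natDegree_X_pow, natDegree_X_sub_C]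

theorem Pcex_roots (k : ℕ) : (Pcex (k + 2)).roots =
    k • ({0} : Multiset ℂ) + ({((k : ℂ) + 2) / 2} + {-(((k : ℂ) + 2) / 2)}) := by
  have h0 := (Pcex_monic k).ne_zero
  rw [Pcex_factor] at h0 ⊢
  rw [roots_mul h0, roots_mul (right_ne_zero_of_mul h0), roots_X_sub_C, roots_X_sub_C, roots_X_pow]

theorem coef_tendsto (e : ℕ) : Tendsto (fun n : ℕ => ((e : ℂ) + 2) * ((e : ℂ) + 1) / 4 *
    (1 + (((n + (e + 1) : ℕ) : ℂ))⁻¹)) atTop (nhds (((e : ℂ) + 2) * ((e : ℂ) + 1) / 4)) := by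
  have h : Tendsto (fun n : ℕ => (((n + (e + 1) : ℕ) : ℂ))⁻¹) atTop (nhds 0) :=
    (tendsto_inv_atTop_nhds_zero_nat (𝕜 := ℂ)).comp (tendsto_add_atTop_nat (e + 1))
  simpa using (h.const_add 1).const_mul (((e : ℂ) + 2) * ((e : ℂ) + 1) / 4)

theorem desc_rel (e n : ℕ) : (n + e + 2) * (n + e + 1) * (e + n).descFactorial n
    = (e + 2) * (e + 1) * (n + (e + 2)).descFactorial n := by
  have h1 := Nat.factorial_mul_descFactorial (show n ≤ e + n by omega)
  have h2 := Nat.factorial_mul_descFactorial (show n ≤ n + (e + 2) by omega)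
  rw [show e + n - n = e by omega] at h1
  rw [show n + (e + 2) - n = e + 2 by omega, show n + (e + 2) = (e + n) + 2 by ring,
    Nat.factorial_succ, Nat.factorial_succ, Nat.factorial_succ, Nat.factorial_succ, ← h1] at h2
  rw [show n + (e + 2) = (e + n) + 2 by ring]
  apply Nat.eq_of_mul_eq_mul_left (Nat.factorial_pos e)
  linarith

theorem eval_formula (e n : ℕ) (z : ℂ) :
    (1 / ((n + (e + 2)).descFactorial n : ℂ)) * (dern n (Pcex (e + 2 + n))).eval z =
    z ^ (e + 2) - ((e : ℂ) + 2) * ((e : ℂ) + 1) / 4 *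
      (1 + (((n + (e + 1) : ℕ) : ℂ))⁻¹) * z ^ e := by
  have hD : ((n + (e + 2)).descFactorial n : ℂ) ≠ 0 := by
    have := Nat.descFactorial_pos.2 (show n ≤ n + (e + 2) by omega)
    exact_mod_cast this.ne'
  have hr : ((n : ℂ) + e + 2) * (n + e + 1) * ((e + n).descFactorial n : ℂ)
      = (e + 2) * (e + 1) * ((n + (e + 2)).descFactorial n : ℂ) := by
    exact_mod_cast desc_rel e n
  have h1 : ((n : ℂ) + (e + 1)) ≠ 0 := by
    have : ((n + (e + 1) : ℕ) : ℂ) ≠ 0 := Nat.cast_ne_zero.2 (by omega)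
    exact_mod_cast this
  have hE : (dern n (Pcex (e + 2 + n))).eval z =
      ((n + (e + 2)).descFactorial n : ℂ) * z ^ (e + 2) -
      ((n : ℂ) + e + 2) ^ 2 / 4 * (((e + n).descFactorial n : ℂ) * z ^ e) := by
    unfold dern Pcex
    change (derivative^[n] _).eval z = _
    rw [iterate_derivative_sub, iterate_derivative_C_mul, iterate_derivative_X_pow_eq_C_mul,
      iterate_derivative_X_pow_eq_C_mul, show e + 2 + n - 2 = e + n by omega,
      show e + n - n = e by omega, show e + 2 + n - n = e + 2 by omega,
      show e + 2 + n = n + (e + 2) by ring]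
    simp only [eval_sub, eval_mul, eval_C, eval_pow, eval_X, eval_natCast]
    push_cast
    ring
  rw [hE]
  push_cast
  have hr2 : ((n : ℂ) + e + 2) * ((e + n).descFactorial n : ℂ)
      = (e + 2) * (e + 1) * ((n + (e + 2)).descFactorial n : ℂ) / ((n : ℂ) + (e + 1)) := by
    rw [eq_div_iff h1, ← hr]; ring
  have hr3 : ((n : ℂ) + e + 2) ^ 2 / 4 * (((e + n).descFactorial n : ℂ) * z ^ e)
     = ((n : ℂ) + e + 2) / 4 * z ^ e * (((n : ℂ) + e + 2) * ((e + n).descFactorial n : ℂ)) := by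
    ring
  rw [hr3, hr2]
  field_simp
  ring

/-- Optimality of the second moment hypothesis in the law of large numbers for
repeated differentiation. -/
theorem stmt16 (d : ℕ) (hd : 2 ≤ d) :
    (∀ m : ℕ, 2 ≤ m →
      (Pcex m).Monic ∧ (Pcex m).natDegree = m ∧ (∀ z ∈ (Pcex m).roots, z.im = 0) ∧
        mom (Pcex m) 1 = 0 ∧ mom (Pcex m) 2 = (m : ℂ) / 2) ∧
    TendstoLocallyUniformly
      (fun (n : ℕ) (z : ℂ) =>
        (1 / ((n + d).descFactorial n : ℂ)) * (dern n (Pcex (d + n))).eval z)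
      (fun z => z ^ d - ((d : ℂ) * ((d : ℂ) - 1) / 4) * z ^ (d - 2)) atTop ∧
    (fun z : ℂ => z ^ d - ((d : ℂ) * ((d : ℂ) - 1) / 4) * z ^ (d - 2))
      ≠ (fun z : ℂ => (z - 0) ^ d) := by
  refine ⟨?_, ?_, ?_⟩
  · intro m hm
    obtain ⟨k, rfl⟩ := Nat.exists_eq_add_of_le' hm
    have hk : (k : ℂ) + 2 ≠ 0 := by
      have : ((k + 2 : ℕ) : ℂ) ≠ 0 := Nat.cast_ne_zero.2 (by omega)
      exact_mod_cast this
    refine ⟨Pcex_monic k, Pcex_natDegree k, ?_, ?_, ?_⟩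
    · intro z hz
      rw [Pcex_roots] at hz
      have hre : (((k : ℂ) + 2) / 2).im = 0 := by
        have : ((k : ℂ) + 2) / 2 = (((k : ℝ) + 2) / 2 : ℝ) := by push_cast; ring
        rw [this, Complex.ofReal_im]
      rcases Multiset.mem_add.1 hz with h | h
      · have := Multiset.mem_of_mem_nsmul h
        rw [Multiset.mem_singleton.1 this]; rfl
      · rcases Multiset.mem_add.1 h with h | h
        · rw [Multiset.mem_singleton.1 h, hre]
        · rw [Multiset.mem_singleton.1 h, Complex.neg_im, hre, neg_zero]
    · unfold mom
      rw [Pcex_roots]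
      simp [Multiset.map_nsmul, Multiset.sum_nsmul]
    · unfold mom
      rw [Pcex_roots, Pcex_natDegree]
      simp only [Multiset.map_add, Multiset.map_nsmul, Multiset.map_singleton, Multiset.sum_add,
        Multiset.sum_nsmul, Multiset.sum_singleton]
      push_cast
      field_simp
      simp
      try ring
  · obtain ⟨e, rfl⟩ := Nat.exists_eq_add_of_le' hd
    simp only [eval_formula, Nat.add_sub_cancel]
    rw [tendstoLocallyUniformly_iff_filter]
    intro x
    rw [tendstoUniformlyOnFilter_iff_tendsto]
    refine Tendsto.mono_right ?_ (nhds_le_uniformity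
      (x ^ (e + 2) - ((((e + 2 : ℕ) : ℂ)) * (((e + 2 : ℕ) : ℂ) - 1) / 4) * x ^ e))
    rw [nhds_prod_eq]
    have hz : Tendsto (fun q : ℕ × ℂ => q.2) (atTop ×ˢ nhds x) (nhds x) := tendsto_snd
    have hc := (coef_tendsto e).comp (tendsto_fst (f := (atTop : Filter ℕ)) (g := nhds x))
    refine Tendsto.prodMk ?_ ?_
    · exact (hz.pow _).sub ((hz.pow _).const_mul _)
    · have h := (hz.pow (e + 2)).sub (hc.mul (hz.pow e))
      have hx : x ^ (e + 2) - ((((e + 2 : ℕ) : ℂ)) * (((e + 2 : ℕ) : ℂ) - 1) / 4) * x ^ e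
          = x ^ (e + 2) - ((e : ℂ) + 2) * ((e : ℂ) + 1) / 4 * x ^ e := by
        push_cast
        ring
      rw [hx]
      exact h
  · obtain ⟨e, rfl⟩ := Nat.exists_eq_add_of_le' hd
    intro h
    have h1 := congrFun h 1
    simp only [one_pow, sub_zero, mul_one] at h1
    have h2 : (((e + 2 : ℕ) : ℂ)) * (((e + 1 : ℕ) : ℂ)) = 0 := by
      push_cast at h1 ⊢
      linear_combination (-4) * h1
    have h3 : (e + 2) * (e + 1) = 0 := by exact_mod_cast h2
    exact absurd h3 (by positivity)
end
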